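/- arXiv:2409.09270 — 2 statements merged into one kernel-verified Lean document; each statement's English description precedes it below -/
import Mathlib

section
/- (Consistency of the nonlocal operator with non-symmetrically truncated neighborhood.) There is an absolute constant C > 0 with the following property. Let δ > 0, r ∈ (0, δ], and let γ̃ satisfy the radial kernel conditions with horizon δ in dimension 2. Let m : ℝ² → [0,1] be measurable with m(z) = 1 for |z| ≤ r and m(z) = 0 for |z| ≥ δ, and set D := ∫_{r ≤ |z| ≤ δ} |z|² γ̃(|z|) dz. Let x ∈ ℝ² and let u : ℝ² → ℝ be four times continuously differentiable on the closed ball B̄_δ(x), with M_j := sup_{|y−x|≤δ} ‖D^j u(y)‖ for j = 1, 2, 3, 4. Then |2∫_{ℝ²} (u(x+z) − u(x)) γ̃(|z|) m(z) dz − Δu(x)| ≤ C (δ² M₄ + D (M₂ + r^{-1} M₁ + δ M₃)). -/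
open MeasureTheory Metric Set

noncomputable section

/-- Surface measure of the unit sphere in `ℝ^d`, expressed as `d` times the volume
of the unit ball. -/
def unitSphereArea (d : ℕ) : ℝ :=
  d * (volume (ball (0 : EuclideanSpace ℝ (Fin d)) 1)).toReal

/-- The radial kernel conditions with horizon `δ` in dimension `d`. -/
def RadialKernel (d : ℕ) (δ : ℝ) (γ : ℝ → ℝ) : Prop :=
  Measurable γ ∧ (∀ s, 0 < s → s < δ → 0 < γ s) ∧ (∀ s, δ ≤ s → γ s = 0) ∧
    IntegrableOn γ (Ioo 0 δ) ∧
    unitSphereArea d * (∫ s in Ioo 0 δ, s ^ (d + 1) * γ s) = d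

/-!
Expand `u (x + z)` to third order at `x`. Against the radial kernel the odd terms integrate to zero,
and by invariance under reflections the quadratic term sees only the trace of the Hessian, with the
factor fixed by the second-moment normalization. The remainder is at most `δ² M₄ ‖z‖² / 6`, hence
contributes `O(δ² M₄)`. The cut-off `m` changes the integral of the Taylor polynomial only over the
shell `r ≤ ‖z‖ ≤ δ`; there the increment of the polynomial is at most
`(M₁ / r + M₂ / 2 + δ M₃ / 6) ‖z‖²`, and this produces the terms with the factor `D`.
-/

open scoped InnerProductSpace Nat

section Taylor

variable {E F : Type*} [NormedAddCommGroup E] [NormedSpace ℝ E]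
  [NormedAddCommGroup F] [NormedSpace ℝ F] {f : E → F} {s : Set E} {x y : E} {n : ℕ}

lemma iteratedDerivWithin_comp_lineMap {k : ℕ} {t : ℝ} (hs : Convex ℝ s) (hs' : UniqueDiffOn ℝ s)
    (hf : ContDiffOn ℝ n f s) (hx : x ∈ s) (hy : y ∈ s) (hk : k ≤ n) (ht : t ∈ Icc (0 : ℝ) 1) :
    iteratedDerivWithin k (f ∘ AffineMap.lineMap x y) (Icc 0 1) t =
      iteratedFDerivWithin ℝ k f s (AffineMap.lineMap x y t) fun _ ↦ y - x := by
  have hseries := ((hf.ftaylorSeriesWithin hs').comp_continuousAffineMap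
    (ContinuousAffineMap.lineMap (R := ℝ) x y)).mono (hs.mapsTo_lineMap hx hy)
  have hderiv := hseries.eq_iteratedFDerivWithin_of_uniqueDiffOn (mod_cast hk)
    uniqueDiffOn_Icc_zero_one ht
  rw [ContinuousAffineMap.coe_lineMap_eq] at hderiv
  rw [iteratedDerivWithin_eq_iteratedFDerivWithin, ← hderiv]
  simp [ftaylorSeriesWithin, ContinuousAffineMap.lineMap, ContinuousAffineMap.contLinear]

/-- The degree-`n` Taylor polynomial of `f` at `x`, with derivatives taken within `s`, as a
function of the increment `z` rather than of the point `x + z`. -/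
def taylorPolynomialWithin (n : ℕ) (f : E → F) (s : Set E) (x z : E) : F :=
  ∑ k ∈ Finset.range (n + 1), (k ! : ℝ)⁻¹ • iteratedFDerivWithin ℝ k f s x fun _ ↦ z

lemma continuous_taylorPolynomialWithin (n : ℕ) (f : E → F) (s : Set E) (x : E) :
    Continuous (taylorPolynomialWithin n f s x) :=
  continuous_finsetSum _ fun k _ ↦
    ((iteratedFDerivWithin ℝ k f s x).cont.comp (by fun_prop)).const_smul _

lemma norm_sub_taylorPolynomialWithin_le {C : ℝ} (hs : Convex ℝ s) (hs' : UniqueDiffOn ℝ s)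
    (hf : ContDiffOn ℝ (n + 1 : ℕ) f s)
    (hC : ∀ y ∈ s, ‖iteratedFDerivWithin ℝ (n + 1) f s y‖ ≤ C) (hx : x ∈ s) (hy : y ∈ s) :
    ‖f y - taylorPolynomialWithin n f s x (y - x)‖ ≤ C * ‖y - x‖ ^ (n + 1) / n ! := by
  have hmaps := hs.mapsTo_lineMap hx hy
  have hline : ContDiffOn ℝ (n + 1) (f ∘ AffineMap.lineMap x y) (Icc (0 : ℝ) 1) :=
    hf.comp (ContinuousAffineMap.lineMap (R := ℝ) x y).contDiff.contDiffOn hmaps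
  have hpoly : taylorWithinEval (f ∘ AffineMap.lineMap x y) n (Icc (0 : ℝ) 1) 0 1 =
      taylorPolynomialWithin n f s x (y - x) := by
    rw [taylor_within_apply, taylorPolynomialWithin]
    refine Finset.sum_congr rfl fun k hk ↦ ?_
    rw [iteratedDerivWithin_comp_lineMap hs hs' hf hx hy (Finset.mem_range.1 hk).le (by simp)]
    simp
  have hbound := taylor_mean_remainder_bound (C := C * ‖y - x‖ ^ (n + 1)) zero_le_one hline
    (right_mem_Icc.2 zero_le_one) fun t ht ↦ by
      rw [iteratedDerivWithin_comp_lineMap hs hs' hf hx hy le_rfl ht]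
      refine (ContinuousMultilinearMap.le_opNorm_mul_pow_of_le _ (pi_norm_const_le _)).trans ?_
      gcongr
      exact hC _ (hmaps ht)
  simpa [hpoly] using hbound

lemma norm_sub_taylorPolynomialWithin_closedBall_le {C R : ℝ} {z : E} (hR : 0 < R)
    (hf : ContDiffOn ℝ (n + 1 : ℕ) f (closedBall x R))
    (hC : ∀ y ∈ closedBall x R, ‖iteratedFDerivWithin ℝ (n + 1) f (closedBall x R) y‖ ≤ C)
    (hz : ‖z‖ ≤ R) :
    ‖f (x + z) - taylorPolynomialWithin n f (closedBall x R) x z‖ ≤ C * ‖z‖ ^ (n + 1) / n ! := by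
  have hunique : UniqueDiffOn ℝ (closedBall x R) :=
    uniqueDiffOn_convex (convex_closedBall x R)
      ⟨x, ball_subset_interior_closedBall (mem_ball_self hR)⟩
  simpa using norm_sub_taylorPolynomialWithin_le (convex_closedBall x R) hunique hf hC
    (mem_closedBall_self hR.le) (show x + z ∈ closedBall x R by simpa)

lemma taylorPolynomialWithin_sub_self (n : ℕ) (f : E → F) (s : Set E) (x z : E) :
    taylorPolynomialWithin n f s x z - f x =
      ∑ k ∈ Finset.range n,
        ((k + 1) ! : ℝ)⁻¹ • iteratedFDerivWithin ℝ (k + 1) f s x fun _ ↦ z := by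
  simp [taylorPolynomialWithin, Finset.sum_range_succ']

lemma norm_taylorPolynomialWithin_sub_self_le (n : ℕ) (f : E → F) (s : Set E) (x z : E) :
    ‖taylorPolynomialWithin n f s x z - f x‖ ≤
      ∑ k ∈ Finset.range n,
        ((k + 1) ! : ℝ)⁻¹ * (‖iteratedFDerivWithin ℝ (k + 1) f s x‖ * ‖z‖ ^ (k + 1)) := by
  rw [taylorPolynomialWithin_sub_self]
  refine norm_sum_le_of_le _ fun k _ ↦ ?_
  rw [norm_smul, norm_inv, Real.norm_natCast]
  gcongr
  exact ContinuousMultilinearMap.le_opNorm_mul_pow_of_le _ (pi_norm_const_le z)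

lemma norm_taylorPolynomialWithin_three_sub_self_le {r R : ℝ} {z : E} (hr : 0 < r)
    (hrz : r ≤ ‖z‖) (hzR : ‖z‖ ≤ R) (f : E → F) (s : Set E) (x : E) :
    ‖taylorPolynomialWithin 3 f s x z - f x‖ ≤
      (r⁻¹ * ‖iteratedFDerivWithin ℝ 1 f s x‖ + ‖iteratedFDerivWithin ℝ 2 f s x‖ / 2 +
        R * ‖iteratedFDerivWithin ℝ 3 f s x‖ / 6) * ‖z‖ ^ 2 := by
  have hlinear : ‖z‖ ≤ r⁻¹ * ‖z‖ ^ 2 := by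
    rw [← div_eq_inv_mul, le_div_iff₀ hr, sq]
    gcongr
  have hcubic : ‖z‖ ^ 3 ≤ R * ‖z‖ ^ 2 := by
    rw [pow_succ']
    gcongr
  calc ‖taylorPolynomialWithin 3 f s x z - f x‖
      ≤ ‖iteratedFDerivWithin ℝ 1 f s x‖ * ‖z‖ + ‖iteratedFDerivWithin ℝ 2 f s x‖ / 2 * ‖z‖ ^ 2 +
          ‖iteratedFDerivWithin ℝ 3 f s x‖ / 6 * ‖z‖ ^ 3 := by
        refine (norm_taylorPolynomialWithin_sub_self_le 3 f s x z).trans_eq ?_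
        simp only [Finset.sum_range_succ, Finset.sum_range_zero, Nat.factorial]
        norm_num
        ring
    _ ≤ ‖iteratedFDerivWithin ℝ 1 f s x‖ * (r⁻¹ * ‖z‖ ^ 2) +
          ‖iteratedFDerivWithin ℝ 2 f s x‖ / 2 * ‖z‖ ^ 2 +
          ‖iteratedFDerivWithin ℝ 3 f s x‖ / 6 * (R * ‖z‖ ^ 2) := by gcongr
    _ = _ := by ring

end Taylor

section Multilinear

variable {E : Type*} [NormedAddCommGroup E]

lemma odd_multilinear_diag [NormedSpace ℝ E] {k : ℕ} (hk : Odd k) (H : E [×k]→L[ℝ] ℝ) :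
    (fun z ↦ H fun _ ↦ z).Odd := fun z ↦ by
  simpa [hk.neg_one_pow] using H.map_smul_univ (fun _ ↦ -1) fun _ ↦ z

lemma bilinear_diag_eq_sum [InnerProductSpace ℝ E] {ι : Type*} [Fintype ι]
    (b : OrthonormalBasis ι ℝ E) (B : E [×2]→L[ℝ] ℝ) (z : E) :
    B (fun _ ↦ z) = ∑ i, ∑ j, ⟪b i, z⟫_ℝ * ⟪b j, z⟫_ℝ * B ![b i, b j] := by
  classical
  calc B (fun _ ↦ z) = B fun _ ↦ ∑ i, ⟪b i, z⟫_ℝ • b i := by simp only [b.sum_repr']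
    _ = ∑ p : Fin 2 → ι, ⟪b (p 0), z⟫_ℝ * ⟪b (p 1), z⟫_ℝ * B ![b (p 0), b (p 1)] := by
      rw [B.map_sum]
      refine Finset.sum_congr rfl fun p _ ↦ ?_
      rw [B.map_smul_univ, Fin.prod_univ_two, smul_eq_mul]
      congr 2
      ext k
      fin_cases k <;> rfl
    _ = ∑ i, ∑ j, ⟪b i, z⟫_ℝ * ⟪b j, z⟫_ℝ * B ![b i, b j] := by
      rw [← Fintype.sum_prod_type', ← (finTwoArrowEquiv ι).sum_comp]
      rfl

end Multilinear

section RotationInvariance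

variable {E : Type*} [NormedAddCommGroup E] [MeasurableSpace E] [BorelSpace E]

lemma integral_mul_comp_norm_of_odd {μ : Measure E} [μ.IsNegInvariant] {f : E → ℝ}
    (hf : f.Odd) (g : ℝ → ℝ) : ∫ z, f z * g ‖z‖ ∂μ = 0 := by
  have hneg := integral_neg_eq_self (fun z ↦ f z * g ‖z‖) μ
  simp only [hf _, norm_neg, neg_mul, integral_neg] at hneg
  linarith

variable [InnerProductSpace ℝ E] [FiniteDimensional ℝ E] {ι : Type*} [Fintype ι]
  {g : ℝ → ℝ}

lemma integral_inner_map_mul_inner_map_mul_comp_norm (e : E ≃ₗᵢ[ℝ] E) (v w : E) (g : ℝ → ℝ) :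
    ∫ z, ⟪e v, z⟫_ℝ * ⟪e w, z⟫_ℝ * g ‖z‖ = ∫ z, ⟪v, z⟫_ℝ * ⟪w, z⟫_ℝ * g ‖z‖ := by
  rw [← e.measurePreserving.integral_comp e.toHomeomorph.measurableEmbedding]
  simp only [LinearIsometryEquiv.inner_map_map, LinearIsometryEquiv.norm_map]

lemma integral_inner_mul_inner_mul_comp_norm_eq_zero {v w : E} (h : ⟪v, w⟫_ℝ = 0) (g : ℝ → ℝ) :
    ∫ z, ⟪v, z⟫_ℝ * ⟪w, z⟫_ℝ * g ‖z‖ = 0 := by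
  have hflip := integral_inner_map_mul_inner_map_mul_comp_norm (ℝ ∙ v)ᗮ.reflection v w g
  rw [Submodule.reflection_orthogonalComplement_singleton_eq_neg,
    Submodule.reflection_mem_subspace_eq_self
      (Submodule.mem_orthogonal_singleton_iff_inner_right.2 h)] at hflip
  simp only [inner_neg_left, neg_mul, integral_neg] at hflip
  linarith

lemma integral_inner_mul_self_mul_comp_norm_congr {v w : E} (h : ‖v‖ = ‖w‖) (g : ℝ → ℝ) :
    ∫ z, ⟪v, z⟫_ℝ * ⟪v, z⟫_ℝ * g ‖z‖ = ∫ z, ⟪w, z⟫_ℝ * ⟪w, z⟫_ℝ * g ‖z‖ := by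
  have hswap := integral_inner_map_mul_inner_map_mul_comp_norm (ℝ ∙ (v - w))ᗮ.reflection v v g
  rw [Submodule.reflection_sub h] at hswap
  exact hswap.symm

lemma integrable_inner_mul_inner_mul_comp_norm (v w : E)
    (hg : Integrable fun z : E ↦ ‖z‖ ^ 2 * g ‖z‖) :
    Integrable fun z : E ↦ ⟪v, z⟫_ℝ * ⟪w, z⟫_ℝ * g ‖z‖ := by
  have hbound (z : E) : ‖⟪v, z⟫_ℝ * ⟪w, z⟫_ℝ / ‖z‖ ^ 2‖ ≤ ‖v‖ * ‖w‖ := by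
    rw [norm_div, norm_mul, norm_pow, norm_norm]
    refine div_le_of_le_mul₀ (by positivity) (by positivity) ?_
    calc ‖⟪v, z⟫_ℝ‖ * ‖⟪w, z⟫_ℝ‖ ≤ ‖v‖ * ‖z‖ * (‖w‖ * ‖z‖) := by
          gcongr <;> exact norm_inner_le_norm _ _
      _ = ‖v‖ * ‖w‖ * ‖z‖ ^ 2 := by ring
  refine (hg.bdd_mul (Measurable.aestronglyMeasurable (by fun_prop))
    (.of_forall hbound)).congr (.of_forall fun z ↦ ?_)
  rcases eq_or_ne z 0 with rfl | hz
  · simp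
  · have := norm_ne_zero_iff.2 hz
    field_simp

lemma card_mul_integral_inner_mul_inner_mul_comp_norm [DecidableEq ι]
    (b : OrthonormalBasis ι ℝ E) (hg : Integrable fun z : E ↦ ‖z‖ ^ 2 * g ‖z‖) (i j : ι) :
    Fintype.card ι * ∫ z, ⟪b i, z⟫_ℝ * ⟪b j, z⟫_ℝ * g ‖z‖ =
      if i = j then ∫ z : E, ‖z‖ ^ 2 * g ‖z‖ else 0 := by
  split_ifs with hij
  · subst hij
    calc Fintype.card ι * ∫ z, ⟪b i, z⟫_ℝ * ⟪b i, z⟫_ℝ * g ‖z‖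
        = ∑ k, ∫ z, ⟪b k, z⟫_ℝ * ⟪b k, z⟫_ℝ * g ‖z‖ := by
          simp [fun k ↦ integral_inner_mul_self_mul_comp_norm_congr
            ((b.norm_eq_one k).trans (b.norm_eq_one i).symm) g]
      _ = ∫ z : E, ‖z‖ ^ 2 * g ‖z‖ := by
          rw [← integral_finsetSum _ fun k _ ↦ integrable_inner_mul_inner_mul_comp_norm _ _ hg]
          simp only [← Finset.sum_mul, ← sq, b.sum_sq_inner_right]
  · rw [integral_inner_mul_inner_mul_comp_norm_eq_zero (b.inner_eq_zero hij), mul_zero]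

lemma card_mul_integral_bilinear_diag_mul_comp_norm (b : OrthonormalBasis ι ℝ E)
    (hg : Integrable fun z : E ↦ ‖z‖ ^ 2 * g ‖z‖) (B : E [×2]→L[ℝ] ℝ) :
    Fintype.card ι * ∫ z, B (fun _ ↦ z) * g ‖z‖ =
      (∫ z : E, ‖z‖ ^ 2 * g ‖z‖) * ∑ i, B ![b i, b i] := by
  classical
  have hint (i j : ι) :
      Integrable fun z ↦ ⟪b i, z⟫_ℝ * ⟪b j, z⟫_ℝ * g ‖z‖ * B ![b i, b j] :=
    (integrable_inner_mul_inner_mul_comp_norm _ _ hg).mul_const _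
  have hexpand (z : E) : B (fun _ ↦ z) * g ‖z‖ =
      ∑ i, ∑ j, ⟪b i, z⟫_ℝ * ⟪b j, z⟫_ℝ * g ‖z‖ * B ![b i, b j] := by
    simp only [bilinear_diag_eq_sum b B z, Finset.sum_mul, mul_right_comm]
  simp only [hexpand]
  rw [integral_finsetSum _ fun i _ ↦ integrable_finsetSum _ fun j _ ↦ hint i j]
  simp only [integral_finsetSum _ fun j _ ↦ hint _ j, integral_mul_const, Finset.mul_sum,
    ← mul_assoc, card_mul_integral_inner_mul_inner_mul_comp_norm b hg, ite_mul, zero_mul,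
    Finset.sum_ite_eq, Finset.mem_univ, if_true]

end RotationInvariance

section RadialIntegrability

variable {E : Type*} [NormedAddCommGroup E] [NormedSpace ℝ E] [FiniteDimensional ℝ E]
  [Nontrivial E] [MeasurableSpace E] [BorelSpace E] {g : ℝ → ℝ} {R : ℝ}

lemma integrable_comp_norm_of_integrableOn_Ioo (μ : Measure E) [μ.IsAddHaarMeasure]
    (hg : IntegrableOn g (Ioo 0 R)) (hg₀ : ∀ s, R ≤ s → g s = 0) :
    Integrable (fun z ↦ g ‖z‖) μ := by
  have hsupport : (fun z : E ↦ g ‖z‖).support ⊆ ball 0 R := fun z hz ↦ by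
    rw [mem_ball_zero_iff]
    exact not_le.1 (mt (hg₀ ‖z‖) hz)
  rw [← integrableOn_iff_integrable_of_support_subset hsupport, integrableOn_fun_norm_addHaar]
  exact hg.continuousOn_mul_of_subset (continuousOn_pow _) isCompact_Icc measurableSet_Ioo
    Ioo_subset_Icc_self

lemma integrable_mul_comp_norm_of_continuousOn (μ : Measure E) [μ.IsAddHaarMeasure]
    (hg : IntegrableOn g (Ioo 0 R)) (hg₀ : ∀ s, R ≤ s → g s = 0) {f : E → ℝ}
    (hf : ContinuousOn f (closedBall 0 R)) : Integrable (fun z ↦ f z * g ‖z‖) μ := by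
  have hsupport : (fun z ↦ f z * g ‖z‖).support ⊆ closedBall 0 R := fun z hz ↦ by
    rw [mem_closedBall_zero_iff]
    exact (not_le.1 (mt (hg₀ ‖z‖) (right_ne_zero_of_mul hz))).le
  rw [← integrableOn_iff_integrable_of_support_subset hsupport]
  exact (integrable_comp_norm_of_integrableOn_Ioo μ hg hg₀).integrableOn.continuousOn_mul hf
    (isCompact_closedBall 0 R)

end RadialIntegrability

lemma abs_mul_sub_le_of_mem_Icc {t : ℝ} (ht : t ∈ Icc (0 : ℝ) 1) (f p : ℝ) :
    |f * t - p| ≤ |f - p| + |p| := by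
  obtain ⟨h₀, h₁⟩ := ht
  calc |f * t - p| = |t * (f - p) + (1 - t) * -p| := by ring_nf
    _ ≤ t * |f - p| + (1 - t) * |p| := by
      refine (abs_add_le _ _).trans_eq ?_
      rw [abs_mul, abs_mul, abs_neg, abs_of_nonneg h₀, abs_of_nonneg (sub_nonneg.2 h₁)]
    _ ≤ 1 * |f - p| + 1 * |p| := by gcongr; linarith
    _ = |f - p| + |p| := by ring

namespace RadialKernel

variable {d : ℕ} {δ r : ℝ} {γ : ℝ → ℝ}

lemma sq_mul_nonneg (hγ : RadialKernel d δ γ) {s : ℝ} (hs : 0 ≤ s) : 0 ≤ s ^ 2 * γ s := by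
  obtain ⟨-, hpos, hzero, -⟩ := hγ
  rcases hs.eq_or_lt with rfl | hs
  · simp
  rcases lt_or_ge s δ with hsδ | hδs
  · have := hpos s hs hsδ
    positivity
  · simp [hzero s hδs]

lemma abs_mul_truncation_sub_mul_le (hγ : RadialKernel d δ γ) {a b : ℝ}
    {m f p : EuclideanSpace ℝ (Fin d) → ℝ} (hm₀₁ : ∀ z, m z ∈ Icc (0 : ℝ) 1)
    (hm₁ : ∀ z, ‖z‖ ≤ r → m z = 1) (hfp : ∀ z, ‖z‖ ≤ δ → |f z - p z| ≤ a * ‖z‖ ^ 2)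
    (hpb : ∀ z, r ≤ ‖z‖ → ‖z‖ ≤ δ → |p z| ≤ b * ‖z‖ ^ 2) (z : EuclideanSpace ℝ (Fin d)) :
    |f z * (γ ‖z‖ * m z) - p z * γ ‖z‖| ≤ a * (‖z‖ ^ 2 * γ ‖z‖) +
      b * {z | r ≤ ‖z‖ ∧ ‖z‖ ≤ δ}.indicator (fun z ↦ ‖z‖ ^ 2 * γ ‖z‖) z := by
  rcases le_or_gt δ ‖z‖ with hδz | hzδ
  · simp [hγ.2.2.1 _ hδz, indicator]
  have habs : ‖z‖ ^ 2 * |γ ‖z‖| = ‖z‖ ^ 2 * γ ‖z‖ := by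
    simpa [abs_mul] using abs_of_nonneg (hγ.sq_mul_nonneg (norm_nonneg z))
  have hfactor : f z * (γ ‖z‖ * m z) - p z * γ ‖z‖ = (f z * m z - p z) * γ ‖z‖ := by ring
  rw [hfactor, abs_mul]
  rcases le_or_gt r ‖z‖ with hrz | hzr
  · have hdiff : |f z * m z - p z| ≤ (a + b) * ‖z‖ ^ 2 := by
      linarith [abs_mul_sub_le_of_mem_Icc (hm₀₁ z) (f z) (p z), hfp z hzδ.le, hpb z hrz hzδ.le]
    calc |f z * m z - p z| * |γ ‖z‖| ≤ (a + b) * ‖z‖ ^ 2 * |γ ‖z‖| := by gcongr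
      _ = a * (‖z‖ ^ 2 * γ ‖z‖) + b * (‖z‖ ^ 2 * γ ‖z‖) := by rw [mul_assoc, habs, add_mul]
      _ = _ := by rw [indicator_of_mem (mem_ofPred.2 ⟨hrz, hzδ.le⟩)]
  · calc |f z * m z - p z| * |γ ‖z‖| = |f z - p z| * |γ ‖z‖| := by rw [hm₁ z hzr.le, mul_one]
      _ ≤ a * ‖z‖ ^ 2 * |γ ‖z‖| := by gcongr; exact hfp z hzδ.le
      _ = a * (‖z‖ ^ 2 * γ ‖z‖) := by rw [mul_assoc, habs]
      _ = _ := by rw [indicator_of_notMem fun hz ↦ hzr.not_ge hz.1, mul_zero, add_zero]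

variable [NeZero d]

lemma integrable_mul_comp_norm (hγ : RadialKernel d δ γ) {f : EuclideanSpace ℝ (Fin d) → ℝ}
    (hf : ContinuousOn f (closedBall 0 δ)) : Integrable fun z ↦ f z * γ ‖z‖ :=
  integrable_mul_comp_norm_of_continuousOn volume hγ.2.2.2.1 hγ.2.2.1 hf

lemma integrable_norm_sq_mul (hγ : RadialKernel d δ γ) :
    Integrable fun z : EuclideanSpace ℝ (Fin d) ↦ ‖z‖ ^ 2 * γ ‖z‖ :=
  hγ.integrable_mul_comp_norm (by fun_prop)

lemma integral_norm_sq_mul (hγ : RadialKernel d δ γ) :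
    ∫ z : EuclideanSpace ℝ (Fin d), ‖z‖ ^ 2 * γ ‖z‖ = d := by
  obtain ⟨-, -, hzero, -, hmoment⟩ := hγ
  have hpow (s : ℝ) : s ^ (d - 1) • (s ^ 2 * γ s) = s ^ (d + 1) * γ s := by
    rw [smul_eq_mul, ← mul_assoc, ← pow_add]
    congr 2
    have := NeZero.one_le (n := d)
    omega
  have htail : ∀ s ∈ Ioi 0 \ Ioo 0 δ, s ^ (d + 1) * γ s = 0 := fun s hs ↦ by
    rw [hzero s (not_lt.1 fun hsδ ↦ hs.2 ⟨hs.1, hsδ⟩), mul_zero]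
  rw [integral_fun_norm_addHaar volume fun s ↦ s ^ 2 * γ s, finrank_euclideanSpace_fin]
  simp only [hpow]
  rw [setIntegral_eq_of_subset_of_forall_sdiff_eq_zero measurableSet_Ioi Ioo_subset_Ioi_self htail]
  simpa only [unitSphereArea, nsmul_eq_mul, smul_eq_mul, mul_assoc, Measure.real] using hmoment

lemma integral_bilinear_diag_mul (hγ : RadialKernel d δ γ)
    (B : EuclideanSpace ℝ (Fin d) [×2]→L[ℝ] ℝ) :
    ∫ z, B (fun _ ↦ z) * γ ‖z‖ =
      ∑ i, B ![EuclideanSpace.single i 1, EuclideanSpace.single i 1] := by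
  have htrace := card_mul_integral_bilinear_diag_mul_comp_norm (EuclideanSpace.basisFun (Fin d) ℝ)
    hγ.integrable_norm_sq_mul B
  rw [hγ.integral_norm_sq_mul, Fintype.card_fin] at htrace
  simpa [EuclideanSpace.basisFun_apply] using
    mul_left_cancel₀ (Nat.cast_ne_zero.2 (NeZero.ne d)) htrace

lemma two_mul_integral_taylorPolynomialWithin_sub_mul (hγ : RadialKernel d δ γ)
    (u : EuclideanSpace ℝ (Fin d) → ℝ) (s : Set (EuclideanSpace ℝ (Fin d)))
    (x : EuclideanSpace ℝ (Fin d)) :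
    2 * ∫ z, (taylorPolynomialWithin 3 u s x z - u x) * γ ‖z‖ =
      ∑ i, iteratedFDerivWithin ℝ 2 u s x
        ![EuclideanSpace.single i 1, EuclideanSpace.single i 1] := by
  let H (k : ℕ) := iteratedFDerivWithin ℝ k u s x
  have hint (k : ℕ) (c : ℝ) : Integrable fun z ↦ c * (H k (fun _ ↦ z) * γ ‖z‖) :=
    (hγ.integrable_mul_comp_norm (f := fun z ↦ H k fun _ ↦ z)
      ((H k).cont.comp (by fun_prop)).continuousOn).const_mul c
  have hodd {k : ℕ} (hk : Odd k) : ∫ z, H k (fun _ ↦ z) * γ ‖z‖ = 0 :=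
    integral_mul_comp_norm_of_odd (odd_multilinear_diag hk (H k)) γ
  simp only [taylorPolynomialWithin_sub_self, smul_eq_mul, Finset.sum_mul, mul_assoc]
  rw [integral_finsetSum _ fun k _ ↦ hint (k + 1) _]
  simp only [integral_const_mul, Finset.sum_range_succ, Finset.sum_range_zero]
  rw [hodd (k := 0 + 1) (by decide), hodd (k := 2 + 1) (by decide),
    hγ.integral_bilinear_diag_mul (H (1 + 1))]
  simp [H]

lemma integrable_mul_comp_norm_mul_truncation (hγ : RadialKernel d δ γ)
    {m f : EuclideanSpace ℝ (Fin d) → ℝ} (hf : ContinuousOn f (closedBall 0 δ))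
    (hm : Measurable m) (hm₀₁ : ∀ z, m z ∈ Icc (0 : ℝ) 1) :
    Integrable fun z ↦ f z * (γ ‖z‖ * m z) := by
  simpa only [mul_assoc] using (hγ.integrable_mul_comp_norm hf).mul_bdd (c := 1)
    hm.aestronglyMeasurable (.of_forall fun z ↦ by
      simpa [abs_of_nonneg (hm₀₁ z).1] using (hm₀₁ z).2)

lemma abs_integral_mul_truncation_sub_le (hγ : RadialKernel d δ γ) {a b : ℝ}
    {m f p : EuclideanSpace ℝ (Fin d) → ℝ} (hm : Measurable m) (hm₀₁ : ∀ z, m z ∈ Icc (0 : ℝ) 1)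
    (hm₁ : ∀ z, ‖z‖ ≤ r → m z = 1) (hf : ContinuousOn f (closedBall 0 δ))
    (hp : ContinuousOn p (closedBall 0 δ)) (hfp : ∀ z, ‖z‖ ≤ δ → |f z - p z| ≤ a * ‖z‖ ^ 2)
    (hpb : ∀ z, r ≤ ‖z‖ → ‖z‖ ≤ δ → |p z| ≤ b * ‖z‖ ^ 2) :
    |(∫ z, f z * (γ ‖z‖ * m z)) - ∫ z, p z * γ ‖z‖| ≤
      a * d + b * ∫ z in {z : EuclideanSpace ℝ (Fin d) | r ≤ ‖z‖ ∧ ‖z‖ ≤ δ}, ‖z‖ ^ 2 * γ ‖z‖ := by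
  have hshell : MeasurableSet {z : EuclideanSpace ℝ (Fin d) | r ≤ ‖z‖ ∧ ‖z‖ ≤ δ} :=
    (measurableSet_le measurable_const measurable_norm).inter
      (measurableSet_le measurable_norm measurable_const)
  have hfull := hγ.integrable_norm_sq_mul.const_mul a
  have hcut := (hγ.integrable_norm_sq_mul.indicator hshell).const_mul b
  rw [← integral_sub (hγ.integrable_mul_comp_norm_mul_truncation hf hm hm₀₁)
    (hγ.integrable_mul_comp_norm hp), ← Real.norm_eq_abs]
  calc _ ≤ ∫ z : EuclideanSpace ℝ (Fin d), (a * (‖z‖ ^ 2 * γ ‖z‖) +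
          b * {z | r ≤ ‖z‖ ∧ ‖z‖ ≤ δ}.indicator (fun z ↦ ‖z‖ ^ 2 * γ ‖z‖) z) :=
        norm_integral_le_of_norm_le (hfull.add hcut)
          (.of_forall (hγ.abs_mul_truncation_sub_mul_le hm₀₁ hm₁ hfp hpb))
    _ = _ := by
        rw [integral_add hfull hcut, integral_const_mul, integral_const_mul,
          integral_indicator hshell, hγ.integral_norm_sq_mul]

lemma abs_two_mul_integral_increment_sub_laplacian_le (hγ : RadialKernel d δ γ) (hδ : 0 < δ)
    (hr : 0 < r) {m : EuclideanSpace ℝ (Fin d) → ℝ} (hm : Measurable m)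
    (hm₀₁ : ∀ z, m z ∈ Icc (0 : ℝ) 1) (hm₁ : ∀ z, ‖z‖ ≤ r → m z = 1)
    {x : EuclideanSpace ℝ (Fin d)} {u : EuclideanSpace ℝ (Fin d) → ℝ}
    (hu : ContDiffOn ℝ 4 u (closedBall x δ)) {M : ℝ}
    (hM : ∀ y ∈ closedBall x δ, ‖iteratedFDerivWithin ℝ 4 u (closedBall x δ) y‖ ≤ M) :
    |2 * (∫ z, (u (x + z) - u x) * (γ ‖z‖ * m z)) -
        ∑ i, iteratedFDerivWithin ℝ 2 u (closedBall x δ) x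
          ![EuclideanSpace.single i 1, EuclideanSpace.single i 1]| ≤
      2 * (δ ^ 2 * M / 6 * d +
        (r⁻¹ * ‖iteratedFDerivWithin ℝ 1 u (closedBall x δ) x‖ +
          ‖iteratedFDerivWithin ℝ 2 u (closedBall x δ) x‖ / 2 +
          δ * ‖iteratedFDerivWithin ℝ 3 u (closedBall x δ) x‖ / 6) *
        ∫ z in {z : EuclideanSpace ℝ (Fin d) | r ≤ ‖z‖ ∧ ‖z‖ ≤ δ}, ‖z‖ ^ 2 * γ ‖z‖) := by
  let p (z : EuclideanSpace ℝ (Fin d)) := taylorPolynomialWithin 3 u (closedBall x δ) x z - u x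
  have hincrement : ContinuousOn (fun z ↦ u (x + z) - u x) (closedBall 0 δ) :=
    (hu.continuousOn.comp (by fun_prop) fun z hz ↦ by simpa using hz).sub continuousOn_const
  have hp : Continuous p := (continuous_taylorPolynomialWithin 3 u _ x).sub continuous_const
  have hremainder (z : EuclideanSpace ℝ (Fin d)) (hz : ‖z‖ ≤ δ) :
      |u (x + z) - u x - p z| ≤ δ ^ 2 * M / 6 * ‖z‖ ^ 2 := by
    have hM₀ := (norm_nonneg _).trans (hM x (mem_closedBall_self hδ.le))
    rw [sub_sub_sub_cancel_right]
    calc _ ≤ M * ‖z‖ ^ 4 / 6 := norm_sub_taylorPolynomialWithin_closedBall_le hδ hu hM hz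
      _ = ‖z‖ ^ 2 * M / 6 * ‖z‖ ^ 2 := by ring
      _ ≤ δ ^ 2 * M / 6 * ‖z‖ ^ 2 := by gcongr
  rw [← hγ.two_mul_integral_taylorPolynomialWithin_sub_mul, ← mul_sub, abs_mul, abs_two]
  gcongr
  exact hγ.abs_integral_mul_truncation_sub_le hm hm₀₁ hm₁ hincrement hp.continuousOn hremainder
    fun z hrz hzδ ↦ norm_taylorPolynomialWithin_three_sub_self_le hr hrz hzδ u _ x

end RadialKernel

theorem stmt16_general {d : ℕ} [NeZero d] {δ r : ℝ} (hδ : 0 < δ) (hr : 0 < r) {γ : ℝ → ℝ}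
    (hγ : RadialKernel d δ γ) {m : EuclideanSpace ℝ (Fin d) → ℝ} (hm : Measurable m)
    (hm₀₁ : ∀ z, m z ∈ Icc (0 : ℝ) 1) (hm₁ : ∀ z, ‖z‖ ≤ r → m z = 1)
    {x : EuclideanSpace ℝ (Fin d)} {u : EuclideanSpace ℝ (Fin d) → ℝ}
    (hu : ContDiffOn ℝ 4 u (closedBall x δ)) {M₁ M₂ M₃ M₄ : ℝ}
    (h₁ : ‖iteratedFDerivWithin ℝ 1 u (closedBall x δ) x‖ ≤ M₁)
    (h₂ : ‖iteratedFDerivWithin ℝ 2 u (closedBall x δ) x‖ ≤ M₂)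
    (h₃ : ‖iteratedFDerivWithin ℝ 3 u (closedBall x δ) x‖ ≤ M₃)
    (h₄ : ∀ y ∈ closedBall x δ, ‖iteratedFDerivWithin ℝ 4 u (closedBall x δ) y‖ ≤ M₄) :
    |2 * (∫ z, (u (x + z) - u x) * (γ ‖z‖ * m z)) -
        ∑ i, iteratedFDerivWithin ℝ 2 u (closedBall x δ) x
          ![EuclideanSpace.single i 1, EuclideanSpace.single i 1]| ≤
      (d + 2) * (δ ^ 2 * M₄ +
        (∫ z in {z : EuclideanSpace ℝ (Fin d) | r ≤ ‖z‖ ∧ ‖z‖ ≤ δ}, ‖z‖ ^ 2 * γ ‖z‖) *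
          (M₂ + r⁻¹ * M₁ + δ * M₃)) := by
  have hM₁ := (norm_nonneg _).trans h₁
  have hM₂ := (norm_nonneg _).trans h₂
  have hM₃ := (norm_nonneg _).trans h₃
  have hM₄ := (norm_nonneg _).trans (h₄ x (mem_closedBall_self hδ.le))
  have herror := hγ.abs_two_mul_integral_increment_sub_laplacian_le hδ hr hm hm₀₁ hm₁ hu h₄
  set D := ∫ z in {z : EuclideanSpace ℝ (Fin d) | r ≤ ‖z‖ ∧ ‖z‖ ≤ δ}, ‖z‖ ^ 2 * γ ‖z‖
  have hD : 0 ≤ D := integral_nonneg fun z ↦ hγ.sq_mul_nonneg (norm_nonneg z)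
  calc _ ≤ 2 * (δ ^ 2 * M₄ / 6 * d + (r⁻¹ * M₁ + M₂ / 2 + δ * M₃ / 6) * D) :=
      herror.trans (by gcongr)
    _ = d / 3 * (δ ^ 2 * M₄) + 2 * (D * (M₂ / 2 + r⁻¹ * M₁ + δ * (M₃ / 6))) := by ring
    _ ≤ (d + 2) * (δ ^ 2 * M₄) + (d + 2) * (D * (M₂ + r⁻¹ * M₁ + δ * M₃)) := by
      gcongr <;> linarith
    _ = _ := by ring

/-- consistency of the nonlocal operator with a non-symmetrically
truncated interaction neighborhood. -/
theorem stmt16 :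
    ∃ C > 0, ∀ δ r : ℝ, 0 < δ → 0 < r → r ≤ δ →
      ∀ γ : ℝ → ℝ, RadialKernel 2 δ γ →
      ∀ m : EuclideanSpace ℝ (Fin 2) → ℝ, Measurable m →
        (∀ z, m z ∈ Icc (0 : ℝ) 1) →
        (∀ z, ‖z‖ ≤ r → m z = 1) → (∀ z, δ ≤ ‖z‖ → m z = 0) →
      ∀ D : ℝ,
        D = (∫ z in {z : EuclideanSpace ℝ (Fin 2) | r ≤ ‖z‖ ∧ ‖z‖ ≤ δ},
          ‖z‖ ^ 2 * γ ‖z‖) →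
      ∀ (x : EuclideanSpace ℝ (Fin 2)) (u : EuclideanSpace ℝ (Fin 2) → ℝ),
        ContDiffOn ℝ 4 u (closedBall x δ) →
      ∀ M₁ M₂ M₃ M₄ : ℝ,
        (∀ y ∈ closedBall x δ, ‖iteratedFDerivWithin ℝ 1 u (closedBall x δ) y‖ ≤ M₁) →
        (∀ y ∈ closedBall x δ, ‖iteratedFDerivWithin ℝ 2 u (closedBall x δ) y‖ ≤ M₂) →
        (∀ y ∈ closedBall x δ, ‖iteratedFDerivWithin ℝ 3 u (closedBall x δ) y‖ ≤ M₃) →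
        (∀ y ∈ closedBall x δ, ‖iteratedFDerivWithin ℝ 4 u (closedBall x δ) y‖ ≤ M₄) →
        |2 * (∫ z, (u (x + z) - u x) * (γ ‖z‖ * m z)) -
            ∑ i : Fin 2, iteratedFDerivWithin ℝ 2 u (closedBall x δ) x
              ![EuclideanSpace.single i 1, EuclideanSpace.single i 1]| ≤
          C * (δ ^ 2 * M₄ + D * (M₂ + r⁻¹ * M₁ + δ * M₃)) :=
  ⟨(2 : ℕ) + 2, by norm_num, fun δ r hδ hr _ γ hγ m hm hm₀₁ hm₁ _ D hD x u hu M₁ M₂ M₃ M₄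
      h₁ h₂ h₃ h₄ ↦
    have hx := mem_closedBall_self hδ.le
    hD ▸ stmt16_general hδ hr hγ hm hm₀₁ hm₁ hu (h₁ x hx) (h₂ x hx) (h₃ x hx) h₄⟩
end
end

section
/- (Uniform-norm error for nonlocal problems with non-symmetric polygonal interaction neighborhoods.) Let Ω ⊂ ℝ² be bounded and open, let δ₀ ∈ (0,1], μ ∈ {0,1}, and A, B, M, R > 0, and suppose x* ∈ ℝ² is such that Ω̂_{δ₀} is contained in the closed ball B̄_R(x*). Then there is a constant C > 0, depending only on Ω, δ₀, A, B, M, R, with the following property. Let δ ∈ (0,δ₀] and r ∈ [δ/2, δ], let γ̃ satisfy the radial kernel conditions with horizon δ in dimension 2 and ∫_{B_δ(0)} γ̃(|z|) dz < ∞, and set D := ∫_{r ≤ |z| ≤ δ} |z|² γ̃(|z|) dz; assume D ≤ 1/2 and 4R·D/r ≤ 1. Let k : Ω̂_δ × Ω̂_δ → [0,∞) be measurable such that for every x ∈ Ω there is a measurable weight m_x : ℝ² → [0,1] with m_x(z) = 1 for |z| ≤ r, m_x(z) = 0 for |z| ≥ δ, and k(x, x+z) = γ̃(|z|) m_x(z)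 for almost every z. Let u₀ : ℝ² → ℝ be four times continuously differentiable on an open neighborhood of the closure of Ω̂_δ with ‖D^j u₀(y)‖ ≤ M for all y ∈ Ω̂_δ and j = 0,…,4, and set f₀ = −Δu₀ on Ω. Let f_δ : Ω → ℝ satisfy sup_Ω |f_δ − f₀| ≤ A δ², let g_δ : Ω_δ^c → ℝ satisfy sup_{Ω_δ^c} |g_δ − u₀| ≤ B δ^{2+μ}, and let u : Ω̂_δ → ℝ be bounded and measurable with −2∫_{Ω̂_δ} (u(y) − u(x)) k(x,y) dy = f_δ(x) for every x ∈ Ω and u = g_δ on Ω_δ^c. Then sup_{x∈Ω} |u(x) − u₀(x)| ≤ C (δ² + δ^{-1} D). -/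
open MeasureTheory Metric Set

noncomputable section

/-- The part of the complement of `Ω` within distance `δ` of the boundary. -/
def omegaC {d : ℕ} (Ω : Set (EuclideanSpace ℝ (Fin d))) (δ : ℝ) :
    Set (EuclideanSpace ℝ (Fin d)) :=
  {y | y ∉ Ω ∧ infDist y (frontier Ω) < δ}

/-- `Ω̂_δ = Ω ∪ Ω_δ^c`. -/
def hatΩ {d : ℕ} (Ω : Set (EuclideanSpace ℝ (Fin d))) (δ : ℝ) :
    Set (EuclideanSpace ℝ (Fin d)) :=
  Ω ∪ omegaC Ω δ

/-- The Laplacian of `u : ℝ^d → ℝ`, as the trace of the second derivative. -/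
def lap (d : ℕ) (u : EuclideanSpace ℝ (Fin d) → ℝ) (x : EuclideanSpace ℝ (Fin d)) : ℝ :=
  ∑ i : Fin d, iteratedFDeriv ℝ 2 u x ![EuclideanSpace.single i 1, EuclideanSpace.single i 1]

/-!
On the ball of radius `r`, where the truncated kernel is still radial, the odd terms of Taylor's
formula integrate to zero and the second-order term reproduces the Laplacian, with an error of order
`δ ^ 2`. On the shell `r ≤ ‖z‖ ≤ δ` symmetry is lost, so there the first-order term survives; since
`‖z‖ ≤ ‖z‖ ^ 2 / r`, it contributes at most `D / r`, which is of order `δ⁻¹ * D`. The error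
`u - u₀` therefore almost solves the homogeneous problem, and a maximum principle with the barrier
`4 * ‖x - p‖ ^ 2` bounds it: the condition `4 * R * D / r ≤ 1` prevents the drift created by the
shell from destroying the subsolution property of this barrier.
-/

section MaximumPrinciple

variable {E : Type*} [Add E] [MeasurableSpace E]

/-- The nonlocal diffusion operator with jump measure `ν` at the point `x`. The paper's operator is
`2 * nonlocalOp (ν x) u x`, where `ν x` has density `z ↦ k x (x + z)`. -/
def nonlocalOp (ν : Measure E) (u : E → ℝ) (x : E) : ℝ := ∫ z, (u (x + z) - u x) ∂ν

lemma nonlocalOp_sub {ν : Measure E} {u v : E → ℝ} {x : E}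
    (hu : Integrable (fun z => u (x + z) - u x) ν) (hv : Integrable (fun z => v (x + z) - v x) ν) :
    nonlocalOp ν (fun y => u y - v y) x = nonlocalOp ν u x - nonlocalOp ν v x := by
  simp only [nonlocalOp]
  rw [← integral_sub hu hv]
  exact integral_congr_ae (.of_forall fun z => by ring)

lemma nonlocalOp_const_mul (ν : Measure E) (c : ℝ) (u : E → ℝ) (x : E) :
    nonlocalOp ν (fun y => c * u y) x = c * nonlocalOp ν u x := by
  simp only [nonlocalOp, ← mul_sub, integral_const_mul]

lemma nonlocalOp_neg (ν : Measure E) (u : E → ℝ) (x : E) :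
    nonlocalOp ν (fun y => -u y) x = -nonlocalOp ν u x := by
  simpa only [neg_one_mul] using nonlocalOp_const_mul ν (-1) u x

lemma integrable_sub_of_forall_abs_le [MeasurableAdd E] {ν : Measure E} [IsFiniteMeasure ν]
    {u : E → ℝ} (hu : Measurable u) {x : E} {T : Set E} {K : ℝ} (hT : ∀ᵐ z ∂ν, x + z ∈ T)
    (hK : ∀ y ∈ T, |u y| ≤ K) : Integrable (fun z => u (x + z) - u x) ν := by
  have hmeas : Measurable fun z => u (x + z) := hu.comp (measurable_const_add x)
  have hint : Integrable (fun z => u (x + z)) ν :=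
    .of_bound hmeas.aestronglyMeasurable K (by filter_upwards [hT] with z hz using hK _ hz)
  exact hint.sub (integrable_const _)

variable {ρ : Measure E} [IsFiniteMeasure ρ] {ν : E → Measure E} {Ω T : Set E}

lemma nonlocalOp_le_sub_mul {ν : Measure E} (hν : ν ≤ ρ) {w : E → ℝ} {S : ℝ} {x : E}
    (hint : Integrable (fun z => w (x + z) - w x) ν) (hxS : w x ≤ S)
    (hS : ∀ᵐ z ∂ν, w (x + z) ≤ S) : nonlocalOp ν w x ≤ (S - w x) * ρ.real univ := by
  have := isFiniteMeasure_of_le ρ hν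
  calc nonlocalOp ν w x
      ≤ ∫ _, (S - w x) ∂ν := by
        refine integral_mono_ae hint (integrable_const _) ?_
        filter_upwards [hS] with z hz using sub_le_sub_right hz _
    _ = (S - w x) * ν.real univ := by rw [integral_const, smul_eq_mul, mul_comm]
    _ ≤ (S - w x) * ρ.real univ := by
        refine mul_le_mul_of_nonneg_left ?_ (sub_nonneg.2 hxS)
        exact ENNReal.toReal_mono (measure_ne_top ρ univ) (hν univ)

lemma le_of_nonlocalOp_pos (hν : ∀ x ∈ Ω, ν x ≤ ρ) (hT : ∀ x ∈ Ω, ∀ᵐ z ∂ν x, x + z ∈ T)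
    {w : E → ℝ} {b c : ℝ} (hw : BddAbove (w '' T)) (hc : 0 < c)
    (hop : ∀ x ∈ Ω, c ≤ nonlocalOp (ν x) w x) (hb : ∀ x ∈ T \ Ω, w x ≤ b) :
    ∀ x ∈ T, w x ≤ b := by
  intro x₀ hx₀
  by_contra! hlt
  set S := sSup (w '' T)
  set N := ρ.real univ
  have hle : ∀ y ∈ T, w y ≤ S := fun y hy => le_csSup hw (mem_image_of_mem w hy)
  have hN : 0 < N + 1 := by positivity
  have hlt_S : max b (S - c / (N + 1)) < S :=
    max_lt (hlt.trans_le (hle x₀ hx₀)) (sub_lt_self S (div_pos hc hN))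
  obtain ⟨_, ⟨x, hxT, rfl⟩, hx⟩ := exists_lt_of_lt_csSup ⟨_, mem_image_of_mem w hx₀⟩ hlt_S
  obtain ⟨hbx, hxS⟩ := max_lt_iff.1 hx
  have hxΩ : x ∈ Ω := by
    by_contra hxΩ
    exact hbx.not_ge (hb x ⟨hxT, hxΩ⟩)
  have hint : Integrable (fun z => w (x + z) - w x) (ν x) :=
    .of_integral_ne_zero (hc.trans_le (hop x hxΩ)).ne'
  have hcN : c ≤ (S - w x) * N := (hop x hxΩ).trans <|
    nonlocalOp_le_sub_mul (hν x hxΩ) hint (hle x hxT) <| by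
      filter_upwards [hT x hxΩ] with z hz using hle _ hz
  have : (S - w x) * (N + 1) < c := by
    rwa [← lt_div_iff₀ hN, sub_lt_comm]
  linarith [hle x hxT]

lemma neg_le_add_mul_of_nonlocalOp_le (hν : ∀ x ∈ Ω, ν x ≤ ρ)
    (hT : ∀ x ∈ Ω, ∀ᵐ z ∂ν x, x + z ∈ T) {φ e : E → ℝ} {H K b c : ℝ}
    (hφi : ∀ x ∈ Ω, Integrable (fun z => φ (x + z) - φ x) (ν x))
    (hei : ∀ x ∈ Ω, Integrable (fun z => e (x + z) - e x) (ν x))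
    (hφ : ∀ x ∈ T, φ x ∈ Icc 0 H) (he : ∀ x ∈ T, -e x ≤ K) (hc : 0 ≤ c)
    (hopφ : ∀ x ∈ Ω, 1 ≤ nonlocalOp (ν x) φ x) (hope : ∀ x ∈ Ω, nonlocalOp (ν x) e x ≤ c)
    (hb : ∀ x ∈ T \ Ω, -e x ≤ b) : ∀ x ∈ T, -e x ≤ b + c * H := by
  intro x₀ hx₀
  suffices h : ∀ c' > c, ∀ x ∈ T, c' * φ x - e x ≤ b + c' * H by
    have hlim : Filter.Tendsto (fun c' => b + c' * H) (nhdsWithin c (Ioi c)) (nhds (b + c * H)) :=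
      (Continuous.tendsto (by fun_prop) c).mono_left nhdsWithin_le_nhds
    refine ge_of_tendsto hlim ?_
    filter_upwards [self_mem_nhdsWithin] with c' hc'
    nlinarith [h c' hc' x₀ hx₀, (hφ x₀ hx₀).1, mem_Ioi.1 hc']
  intro c' hc'
  have hφH : ∀ x ∈ T, c' * φ x ≤ c' * H := fun x hx =>
    mul_le_mul_of_nonneg_left (hφ x hx).2 (hc.trans hc'.le)
  refine le_of_nonlocalOp_pos hν hT ⟨K + c' * H, ?_⟩ (sub_pos.2 hc') (fun x hx => ?_)
    fun x hx => by linarith [hb x hx, hφH x hx.1]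
  · rintro _ ⟨x, hx, rfl⟩
    linarith [he x hx, hφH x hx]
  · have hφi' : Integrable (fun z => c' * φ (x + z) - c' * φ x) (ν x) := by
      simpa only [mul_sub] using (hφi x hx).const_mul c'
    rw [nonlocalOp_sub hφi' (hei x hx), nonlocalOp_const_mul]
    nlinarith [hopφ x hx, hope x hx]

lemma abs_le_add_mul_of_abs_nonlocalOp_le (hν : ∀ x ∈ Ω, ν x ≤ ρ)
    (hT : ∀ x ∈ Ω, ∀ᵐ z ∂ν x, x + z ∈ T) {φ e : E → ℝ} {H K b c : ℝ}
    (hφi : ∀ x ∈ Ω, Integrable (fun z => φ (x + z) - φ x) (ν x))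
    (hei : ∀ x ∈ Ω, Integrable (fun z => e (x + z) - e x) (ν x))
    (hφ : ∀ x ∈ T, φ x ∈ Icc 0 H) (he : ∀ x ∈ T, |e x| ≤ K) (hc : 0 ≤ c)
    (hopφ : ∀ x ∈ Ω, 1 ≤ nonlocalOp (ν x) φ x) (hope : ∀ x ∈ Ω, |nonlocalOp (ν x) e x| ≤ c)
    (hb : ∀ x ∈ T \ Ω, |e x| ≤ b) : ∀ x ∈ T, |e x| ≤ b + c * H := by
  intro x hx
  refine abs_le'.2 ⟨?_, ?_⟩
  · have hei' : ∀ x ∈ Ω, Integrable (fun z => -e (x + z) - -e x) (ν x) := fun x hx =>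
      (hei x hx).neg.congr (.of_forall fun z => neg_sub' _ _)
    simpa only [neg_neg] using neg_le_add_mul_of_nonlocalOp_le hν hT hφi hei' hφ
      (fun x hx => (neg_neg (e x)).trans_le <| (le_abs_self _).trans (he x hx)) hc hopφ
      (fun x hx => (nonlocalOp_neg _ e x).trans_le <| (neg_le_abs _).trans (hope x hx))
      (fun x hx => (neg_neg (e x)).trans_le <| (le_abs_self _).trans (hb x hx)) x hx
  · exact neg_le_add_mul_of_nonlocalOp_le hν hT hφi hei hφ
      (fun x hx => (neg_le_abs _).trans (he x hx)) hc hopφ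
      (fun x hx => (le_abs_self _).trans (hope x hx))
      (fun x hx => (neg_le_abs _).trans (hb x hx)) x hx

end MaximumPrinciple

section Taylor

variable {E F : Type*} [NormedAddCommGroup E] [NormedSpace ℝ E] [NormedAddCommGroup F]
  [NormedSpace ℝ F]

lemma norm_sub_taylor_le [CompleteSpace F] {u : E → F} {x z : E} {n : ℕ} {M : ℝ}
    (hu : ∀ t ∈ Icc (0 : ℝ) 1, ContDiffAt ℝ (n + 1) u (x + t • z))
    (hM : ∀ t ∈ Icc (0 : ℝ) 1, ‖iteratedFDeriv ℝ (n + 1) u (x + t • z)‖ ≤ M) :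
    ‖u (x + z) - ∑ k ∈ Finset.range (n + 1),
      (k.factorial : ℝ)⁻¹ • iteratedFDeriv ℝ k u x fun _ => z‖ ≤
        (n.factorial : ℝ)⁻¹ * (M * ‖z‖ ^ (n + 1)) := by
  rw [map_add_eq_sum_add_integral_iteratedFDeriv hu, add_sub_cancel_left, norm_smul, norm_inv,
    RCLike.norm_natCast]
  gcongr
  have hbound : ∀ t ∈ uIoc (0 : ℝ) 1,
      ‖(1 - t) ^ n • iteratedFDeriv ℝ (n + 1) u (x + t • z) fun _ => z‖ ≤
        M * ‖z‖ ^ (n + 1) := by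
    intro t ht
    rw [uIoc_of_le zero_le_one] at ht
    have ht' : t ∈ Icc (0 : ℝ) 1 := Ioc_subset_Icc_self ht
    have h1 : ‖(1 - t) ^ n‖ ≤ 1 := by
      rw [norm_pow, Real.norm_of_nonneg (sub_nonneg.2 ht'.2)]
      exact pow_le_one₀ (sub_nonneg.2 ht'.2) (sub_le_self 1 ht'.1)
    have h2 := (iteratedFDeriv ℝ (n + 1) u (x + t • z)).le_opNorm_mul_pow_of_le
      (pi_norm_const_le (ι := Fin (n + 1)) z)
    rw [norm_smul]
    exact (mul_le_of_le_one_left (norm_nonneg _) h1).trans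
      (h2.trans (mul_le_mul_of_nonneg_right (hM t ht') (by positivity)))
  simpa using intervalIntegral.norm_integral_le_of_norm_le_const hbound

lemma add_smul_mem_ball {x z : E} {r t : ℝ} (hz : ‖z‖ < r) (ht : t ∈ Icc (0 : ℝ) 1) :
    x + t • z ∈ ball x r := by
  rw [mem_ball_iff_norm, add_sub_cancel_left, norm_smul, Real.norm_of_nonneg ht.1]
  exact (mul_le_of_le_one_left (norm_nonneg z) ht.2).trans_lt hz

lemma abs_sub_le_mul_norm {u : E → ℝ} {x z : E} {r M : ℝ}
    (hu : ∀ y ∈ ball x r, ContDiffAt ℝ 1 u y)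
    (hM : ∀ y ∈ ball x r, ‖iteratedFDeriv ℝ 1 u y‖ ≤ M) (hz : ‖z‖ < r) :
    |u (x + z) - u x| ≤ M * ‖z‖ := by
  have h := norm_sub_taylor_le (n := 0) (u := u) (x := x) (z := z)
    (fun t ht => by simpa using hu _ (add_smul_mem_ball hz ht))
    (fun t ht => hM _ (add_smul_mem_ball hz ht))
  simpa using h

lemma abs_sub_taylor_three_le {u : E → ℝ} {x z : E} {r M : ℝ}
    (hu : ∀ y ∈ ball x r, ContDiffAt ℝ 4 u y)
    (hM : ∀ y ∈ ball x r, ‖iteratedFDeriv ℝ 4 u y‖ ≤ M) (hz : ‖z‖ < r) :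
    |u (x + z) - u x - ((iteratedFDeriv ℝ 1 u x fun _ => z) +
      (iteratedFDeriv ℝ 2 u x fun _ => z) / 2 + (iteratedFDeriv ℝ 3 u x fun _ => z) / 6)| ≤
        M / 6 * ‖z‖ ^ 4 := by
  have h := norm_sub_taylor_le (n := 3) (u := u) (x := x) (z := z)
    (fun t ht => (hu _ (add_smul_mem_ball hz ht)).of_le (by norm_num))
    (fun t ht => hM _ (add_smul_mem_ball hz ht))
  calc _ = _ := by
        rw [← Real.norm_eq_abs]
        congr 1
        norm_num [Finset.sum_range_succ, Nat.factorial]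
        ring
    _ ≤ _ := h
    _ = M / 6 * ‖z‖ ^ 4 := by
        norm_num [Nat.factorial]
        ring

end Taylor

section Isotropic

open Module InnerProductSpace Laplacian

variable {E : Type*} [NormedAddCommGroup E] [InnerProductSpace ℝ E]

lemma bilin_self_eq_sum_inner_mul_inner {ι : Type*} [Fintype ι] (b : OrthonormalBasis ι ℝ E)
    (T : ContinuousMultilinearMap ℝ (fun _ : Fin 2 => E) ℝ) (z : E) :
    T (fun _ => z) = ∑ i, ∑ j, T ![b i, b j] * (⟪b i, z⟫_ℝ * ⟪b j, z⟫_ℝ) := by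
  classical
  have hcoeff : ∀ p : Fin 2 → ι, T (fun k => ⟪b (p k), z⟫_ℝ • b (p k)) =
      T ![b (p 0), b (p 1)] * (⟪b (p 0), z⟫_ℝ * ⟪b (p 1), z⟫_ℝ) := by
    intro p
    rw [T.map_smul_univ, Fin.prod_univ_two, smul_eq_mul, mul_comm]
    congr 2
    funext k
    fin_cases k <;> rfl
  calc T (fun _ => z) = T (fun _ => ∑ i, ⟪b i, z⟫_ℝ • b i) := by rw [b.sum_repr' z]
    _ = ∑ p : Fin 2 → ι, T ![b (p 0), b (p 1)] * (⟪b (p 0), z⟫_ℝ * ⟪b (p 1), z⟫_ℝ) := by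
      simp only [T.map_sum, hcoeff]
    _ = _ := by
      rw [← (finTwoArrowEquiv ι).symm.sum_comp, Fintype.sum_prod_type]
      rfl

lemma abs_laplacian_le [FiniteDimensional ℝ E] {u : E → ℝ} {x : E} {M : ℝ}
    (hM : ‖iteratedFDeriv ℝ 2 u x‖ ≤ M) : |Δ u x| ≤ finrank ℝ E * M := by
  set b := stdOrthonormalBasis ℝ E
  have hterm : ∀ i, |iteratedFDeriv ℝ 2 u x ![b i, b i]| ≤ M := fun i =>
    ((iteratedFDeriv ℝ 2 u x).le_opNorm _).trans <| by
      simpa [Fin.prod_univ_two, b.norm_eq_one] using hM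
  rw [laplacian_eq_iteratedFDeriv_orthonormalBasis u b]
  calc |∑ i, iteratedFDeriv ℝ 2 u x ![b i, b i]|
      ≤ ∑ i, |iteratedFDeriv ℝ 2 u x ![b i, b i]| := Finset.abs_sum_le_sum_abs _ _
    _ ≤ ∑ _i : Fin (finrank ℝ E), M := Finset.sum_le_sum fun i _ => hterm i
    _ = finrank ℝ E * M := by simp only [Finset.sum_const, Finset.card_univ, Fintype.card_fin,
          nsmul_eq_mul]

variable [MeasurableSpace E]

lemma integrable_inner_mul_inner [BorelSpace E] [FiniteDimensional ℝ E] {ρ : Measure E}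
    (hρ : Integrable (fun z => ‖z‖ ^ 2) ρ) (v w : E) :
    Integrable (fun z => ⟪v, z⟫_ℝ * ⟪w, z⟫_ℝ) ρ := by
  refine (hρ.const_mul (‖v‖ * ‖w‖)).mono' (by fun_prop) (.of_forall fun z => ?_)
  rw [norm_mul]
  calc ‖⟪v, z⟫_ℝ‖ * ‖⟪w, z⟫_ℝ‖ ≤ (‖v‖ * ‖z‖) * (‖w‖ * ‖z‖) := by
        gcongr <;> exact norm_inner_le_norm _ _
    _ = ‖v‖ * ‖w‖ * ‖z‖ ^ 2 := by ring

/-- A measure on a Euclidean space is isotropic if it is invariant under linear isometries; this is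
the measure-theoretic form of having a radial density. -/
def IsIsotropic (ρ : Measure E) : Prop := ∀ Q : E ≃ₗᵢ[ℝ] E, MeasurePreserving Q ρ ρ

namespace IsIsotropic

variable [BorelSpace E] {ρ : Measure E}

lemma restrict_ball (hρ : IsIsotropic ρ) (r : ℝ) : IsIsotropic (ρ.restrict (ball 0 r)) := by
  intro Q
  have h := (hρ Q).restrict_preimage (measurableSet_ball (x := (0 : E)) (ε := r))
  rwa [Q.preimage_ball, map_zero] at h

lemma integral_comp (hρ : IsIsotropic ρ) (Q : E ≃ₗᵢ[ℝ] E) (F : E → ℝ) :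
    ∫ z, F (Q z) ∂ρ = ∫ z, F z ∂ρ :=
  (hρ Q).integral_comp Q.toHomeomorph.measurableEmbedding F

lemma integral_eq_zero_of_odd (hρ : IsIsotropic ρ) {F : E → ℝ} (hF : Function.Odd F) :
    ∫ z, F z ∂ρ = 0 := by
  have h := hρ.integral_comp (LinearIsometryEquiv.neg ℝ) F
  simp only [LinearIsometryEquiv.coe_neg, hF _, integral_neg] at h
  linarith

lemma integral_multilinear_eq_zero_of_odd (hρ : IsIsotropic ρ) {n : ℕ} (hn : Odd n)
    (T : ContinuousMultilinearMap ℝ (fun _ : Fin n => E) ℝ) : ∫ z, T (fun _ => z) ∂ρ = 0 := by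
  refine hρ.integral_eq_zero_of_odd fun z => ?_
  have h := T.map_smul_univ (fun _ => -1) fun _ => z
  simpa [hn.neg_one_pow] using h

lemma integral_inner_mul_inner_eq_zero (hρ : IsIsotropic ρ) {v w : E}
    (hvw : ⟪v, w⟫_ℝ = 0) : ∫ z, ⟪v, z⟫_ℝ * ⟪w, z⟫_ℝ ∂ρ = 0 := by
  set Q := (ℝ ∙ v)ᗮ.reflection
  have hv : Q v = -v := Submodule.reflection_orthogonalComplement_singleton_eq_neg v
  have hw : Q w = w := Submodule.reflection_mem_subspace_eq_self
    (Submodule.mem_orthogonal_singleton_iff_inner_right.2 hvw)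
  have hQ : ∀ y z, ⟪y, Q z⟫_ℝ = ⟪Q y, z⟫_ℝ := fun y z => by
    rw [← Q.inner_map_map (Q y) z, Submodule.reflection_reflection]
  have h := hρ.integral_comp Q fun z => ⟪v, z⟫_ℝ * ⟪w, z⟫_ℝ
  simp only [hQ, hv, hw, inner_neg_left, neg_mul, integral_neg] at h
  linarith

variable [FiniteDimensional ℝ E] {ι : Type*} [Fintype ι]

lemma card_mul_integral_inner_mul_self (hρ : IsIsotropic ρ) (hint : Integrable (fun z => ‖z‖ ^ 2) ρ)
    (b : OrthonormalBasis ι ℝ E) (i : ι) :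
    Fintype.card ι * ∫ z, ⟪b i, z⟫_ℝ * ⟪b i, z⟫_ℝ ∂ρ = ∫ z, ‖z‖ ^ 2 ∂ρ := by
  classical
  have hswap : ∀ j, ∫ z, ⟪b j, z⟫_ℝ * ⟪b j, z⟫_ℝ ∂ρ = ∫ z, ⟪b i, z⟫_ℝ * ⟪b i, z⟫_ℝ ∂ρ := by
    intro j
    set Q := b.equiv b (Equiv.swap i j)
    have hQ : Q (b i) = b j := by rw [b.equiv_apply_basis, Equiv.swap_apply_left]
    rw [← hρ.integral_comp Q fun z => ⟪b j, z⟫_ℝ * ⟪b j, z⟫_ℝ]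
    simp only [← hQ, Q.inner_map_map]
  calc Fintype.card ι * ∫ z, ⟪b i, z⟫_ℝ * ⟪b i, z⟫_ℝ ∂ρ
      = ∑ j, ∫ z, ⟪b j, z⟫_ℝ * ⟪b j, z⟫_ℝ ∂ρ := by
        simp only [hswap, Finset.sum_const, nsmul_eq_mul, Finset.card_univ]
    _ = ∫ z, ∑ j, ⟪b j, z⟫_ℝ * ⟪b j, z⟫_ℝ ∂ρ :=
        (integral_finsetSum _ fun j _ => integrable_inner_mul_inner hint _ _).symm
    _ = ∫ z, ‖z‖ ^ 2 ∂ρ := by simp only [← sq, b.sum_sq_inner_right]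

lemma card_mul_integral_bilin_self (hρ : IsIsotropic ρ) (hint : Integrable (fun z => ‖z‖ ^ 2) ρ)
    (b : OrthonormalBasis ι ℝ E) (T : ContinuousMultilinearMap ℝ (fun _ : Fin 2 => E) ℝ) :
    Fintype.card ι * ∫ z, T (fun _ => z) ∂ρ = (∑ i, T ![b i, b i]) * ∫ z, ‖z‖ ^ 2 ∂ρ := by
  have hdiag : ∀ i, ∑ j, T ![b i, b j] * ∫ z, ⟪b i, z⟫_ℝ * ⟪b j, z⟫_ℝ ∂ρ =
      T ![b i, b i] * ∫ z, ⟪b i, z⟫_ℝ * ⟪b i, z⟫_ℝ ∂ρ := fun i =>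
    Fintype.sum_eq_single i fun j hji => by
      rw [hρ.integral_inner_mul_inner_eq_zero (b.inner_eq_zero hji.symm), mul_zero]
  have hT : ∫ z, T (fun _ => z) ∂ρ = ∑ i, T ![b i, b i] * ∫ z, ⟪b i, z⟫_ℝ * ⟪b i, z⟫_ℝ ∂ρ := by
    have hi : ∀ i j, Integrable (fun z => T ![b i, b j] * (⟪b i, z⟫_ℝ * ⟪b j, z⟫_ℝ)) ρ :=
      fun i j => (integrable_inner_mul_inner hint _ _).const_mul _
    simp only [bilin_self_eq_sum_inner_mul_inner b T, ← hdiag, ← integral_const_mul]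
    rw [integral_finsetSum _ fun i _ => integrable_finsetSum _ fun j _ => hi i j]
    exact Finset.sum_congr rfl fun i _ => integral_finsetSum _ fun j _ => hi i j
  simp only [hT, Finset.mul_sum, Finset.sum_mul, mul_left_comm (Fintype.card ι : ℝ),
    hρ.card_mul_integral_inner_mul_self hint]

lemma finrank_mul_integral_iteratedFDeriv_two (hρ : IsIsotropic ρ)
    (hint : Integrable (fun z => ‖z‖ ^ 2) ρ) (u : E → ℝ) (x : E) :
    finrank ℝ E * ∫ z, iteratedFDeriv ℝ 2 u x (fun _ => z) ∂ρ = Δ u x * ∫ z, ‖z‖ ^ 2 ∂ρ := by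
  have h := hρ.card_mul_integral_bilin_self hint (stdOrthonormalBasis ℝ E) (iteratedFDeriv ℝ 2 u x)
  rwa [Fintype.card_fin, ← congrFun (laplacian_eq_iteratedFDeriv_orthonormalBasis u _) x] at h

end IsIsotropic

end Isotropic

section Truncation

variable {E : Type*} [NormedAddCommGroup E] [MeasurableSpace E] {ρ ν : Measure E} {r : ℝ}

/-- `ν` is obtained from `ρ` by removing mass outside the ball of radius `r` only. This is how the
paper's weighted kernels with a polygonal interaction neighbourhood arise. -/
structure IsTruncation (r : ℝ) (ρ ν : Measure E) : Prop where
  le : ν ≤ ρ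
  restrict_ball : ν.restrict (ball 0 r) = ρ.restrict (ball 0 r)

/-- The second moment of `ρ` outside the ball of radius `r`, the paper's `D`. -/
def shellMoment (ρ : Measure E) (r : ℝ) : ℝ := ∫ z in (ball 0 r)ᶜ, ‖z‖ ^ 2 ∂ρ

lemma shellMoment_nonneg (ρ : Measure E) (r : ℝ) : 0 ≤ shellMoment ρ r :=
  integral_nonneg fun z => by positivity

variable [BorelSpace E]

lemma isTruncation_withDensity {m : E → ℝ} (hm1 : ∀ z, m z ≤ 1)
    (hmr : ∀ z, ‖z‖ < r → m z = 1) :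
    IsTruncation r ρ (ρ.withDensity fun z => ENNReal.ofReal (m z)) where
  le := by
    calc ρ.withDensity (fun z => ENNReal.ofReal (m z)) ≤ ρ.withDensity 1 :=
          withDensity_mono (.of_forall fun z => ENNReal.ofReal_le_one.2 (hm1 z))
      _ = ρ := withDensity_one
  restrict_ball := by
    have hone : (fun z => ENNReal.ofReal (m z)) =ᵐ[ρ.restrict (ball 0 r)] 1 := by
      filter_upwards [ae_restrict_mem measurableSet_ball] with z hz
      rw [hmr z (mem_ball_zero_iff.1 hz), ENNReal.ofReal_one, Pi.one_apply]
    rw [restrict_withDensity measurableSet_ball, withDensity_congr_ae hone, withDensity_one]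

lemma IsTruncation.abs_integral_sub_le (hν : IsTruncation r ρ ν) (hr : 0 < r)
    (hρ : Integrable (fun z => ‖z‖ ^ 2) ρ) {F : E → ℝ} {c : ℝ} (hF : Integrable F ν) (hc : 0 ≤ c)
    (hFc : ∀ᵐ z ∂ν, |F z| ≤ c * ‖z‖) :
    |∫ z, F z ∂ν - ∫ z in ball 0 r, F z ∂ρ| ≤ c / r * shellMoment ρ r := by
  have hle : ν.restrict (ball 0 r)ᶜ ≤ ρ.restrict (ball 0 r)ᶜ :=
    Measure.restrict_mono_measure hν.le _
  have hint : Integrable (fun z => c / r * ‖z‖ ^ 2) (ρ.restrict (ball 0 r)ᶜ) :=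
    hρ.restrict.const_mul _
  rw [← hν.restrict_ball, ← integral_add_compl measurableSet_ball hF, add_sub_cancel_left,
    shellMoment, ← integral_const_mul, ← Real.norm_eq_abs]
  calc ‖∫ z in (ball 0 r)ᶜ, F z ∂ν‖ ≤ ∫ z in (ball 0 r)ᶜ, c / r * ‖z‖ ^ 2 ∂ν := by
        refine norm_integral_le_of_norm_le (hint.mono_measure hle) ?_
        filter_upwards [ae_restrict_of_ae hFc, ae_restrict_mem measurableSet_ball.compl]
          with z hz hzr
        have hrz : r ≤ ‖z‖ := by simpa using hzr
        calc |F z| ≤ c * ‖z‖ := hz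
          _ = c / r * (r * ‖z‖) := by field_simp
          _ ≤ c / r * ‖z‖ ^ 2 := by rw [sq]; gcongr
    _ ≤ ∫ z in (ball 0 r)ᶜ, c / r * ‖z‖ ^ 2 ∂ρ :=
        integral_mono_measure hle (.of_forall fun z => by positivity) hint

end Truncation

section Consistency

open Module InnerProductSpace Laplacian

variable {E : Type*} [NormedAddCommGroup E] [InnerProductSpace ℝ E] [FiniteDimensional ℝ E]
  [MeasurableSpace E] [BorelSpace E] {ρ ν : Measure E} {r δ M : ℝ} {u : E → ℝ} {x : E}

lemma integrable_of_continuous_of_ae_norm_lt [IsFiniteMeasure ν] (hν : ∀ᵐ z ∂ν, ‖z‖ < δ)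
    {F : E → ℝ} (hF : Continuous F) : Integrable F ν := by
  have hcpt := hF.continuousOn.integrableOn_compact (μ := ν) (isCompact_closedBall (0 : E) δ)
  rwa [IntegrableOn, Measure.restrict_eq_self_of_ae_mem] at hcpt
  filter_upwards [hν] with z hz using mem_closedBall_zero_iff.2 hz.le

lemma integrable_sub_of_contDiffAt [IsFiniteMeasure ν] (hν : ∀ᵐ z ∂ν, ‖z‖ < δ)
    (hu : ∀ y ∈ ball x δ, ContDiffAt ℝ 1 u y)
    (hM : ∀ y ∈ ball x δ, ‖iteratedFDeriv ℝ 1 u y‖ ≤ M) :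
    Integrable (fun z => u (x + z) - u x) ν := by
  have hcont : ContinuousOn (fun z => u (x + z) - u x) (ball 0 δ) := fun z hz => by
    have hxz : x + z ∈ ball x δ := by simpa using hz
    exact ((hu _ hxz).continuousAt.comp (f := fun z => x + z)
      (continuous_const_add x).continuousAt).continuousWithinAt.sub continuousWithinAt_const
  have hmeas := hcont.aestronglyMeasurable (μ := ν) measurableSet_ball
  rw [Measure.restrict_eq_self_of_ae_mem
    (hν.mono fun z hz => mem_ball_zero_iff.2 hz)] at hmeas
  refine (integrable_of_continuous_of_ae_norm_lt hν (continuous_norm.const_mul M)).mono' hmeas ?_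
  filter_upwards [hν] with z hz using abs_sub_le_mul_norm hu hM hz

lemma integral_pow_four_le [IsFiniteMeasure ρ] (hr : ∀ᵐ z ∂ρ, ‖z‖ < r) :
    ∫ z, ‖z‖ ^ 4 ∂ρ ≤ r ^ 2 * ∫ z, ‖z‖ ^ 2 ∂ρ := by
  rw [← integral_const_mul]
  refine integral_mono_ae (integrable_of_continuous_of_ae_norm_lt hr (by fun_prop))
    (integrable_of_continuous_of_ae_norm_lt hr (by fun_prop)) ?_
  filter_upwards [hr] with z hz
  calc ‖z‖ ^ 4 = ‖z‖ ^ 2 * ‖z‖ ^ 2 := by ring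
    _ ≤ r ^ 2 * ‖z‖ ^ 2 := by gcongr

lemma IsIsotropic.integral_taylor_three [Nontrivial E] [IsFiniteMeasure ρ] (hρ : IsIsotropic ρ)
    (hr : ∀ᵐ z ∂ρ, ‖z‖ < r) (u : E → ℝ) (x : E) :
    ∫ z, ((iteratedFDeriv ℝ 1 u x fun _ => z) + (iteratedFDeriv ℝ 2 u x fun _ => z) / 2 +
      (iteratedFDeriv ℝ 3 u x fun _ => z) / 6) ∂ρ =
        (∫ z, ‖z‖ ^ 2 ∂ρ) / finrank ℝ E * Δ u x / 2 := by
  have hint : ∀ n, Integrable (fun z => iteratedFDeriv ℝ n u x fun _ => z) ρ := fun n =>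
    integrable_of_continuous_of_ae_norm_lt hr (by fun_prop)
  have hd : (finrank ℝ E : ℝ) ≠ 0 := Nat.cast_ne_zero.2 finrank_pos.ne'
  have h2 := hρ.finrank_mul_integral_iteratedFDeriv_two
    (integrable_of_continuous_of_ae_norm_lt hr (by fun_prop)) u x
  have h12 : Integrable (fun z => (iteratedFDeriv ℝ 1 u x fun _ => z) +
      (iteratedFDeriv ℝ 2 u x fun _ => z) / 2) ρ := (hint 1).add ((hint 2).div_const 2)
  have h1 := hρ.integral_multilinear_eq_zero_of_odd odd_one (iteratedFDeriv ℝ 1 u x)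
  have h3 := hρ.integral_multilinear_eq_zero_of_odd (by decide) (iteratedFDeriv ℝ 3 u x)
  rw [integral_add h12 ((hint 3).div_const 6), integral_add (hint 1) ((hint 2).div_const 2),
    integral_div, integral_div, h1, h3, zero_add, zero_div, add_zero]
  field_simp
  linarith

lemma IsIsotropic.abs_two_mul_nonlocalOp_sub_le [Nontrivial E] [IsFiniteMeasure ρ]
    (hρ : IsIsotropic ρ) (hr : ∀ᵐ z ∂ρ, ‖z‖ < r) (hM0 : 0 ≤ M)
    (hu : ∀ y ∈ ball x r, ContDiffAt ℝ 4 u y)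
    (hM : ∀ y ∈ ball x r, ∀ j ≤ 4, ‖iteratedFDeriv ℝ j u y‖ ≤ M) :
    |2 * nonlocalOp ρ u x - (∫ z, ‖z‖ ^ 2 ∂ρ) / finrank ℝ E * Δ u x| ≤
      M * r ^ 2 / 3 * ∫ z, ‖z‖ ^ 2 ∂ρ := by
  set P : E → ℝ := fun z => (iteratedFDeriv ℝ 1 u x fun _ => z) +
    (iteratedFDeriv ℝ 2 u x fun _ => z) / 2 + (iteratedFDeriv ℝ 3 u x fun _ => z) / 6
  have hFint : Integrable (fun z => u (x + z) - u x) ρ :=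
    integrable_sub_of_contDiffAt hr (fun y hy => (hu y hy).of_le (by norm_num))
      fun y hy => hM y hy 1 (by norm_num)
  have hPint : Integrable P ρ := integrable_of_continuous_of_ae_norm_lt hr (by fun_prop)
  have hrem : |∫ z, (u (x + z) - u x - P z) ∂ρ| ≤ M / 6 * (r ^ 2 * ∫ z, ‖z‖ ^ 2 ∂ρ) := by
    rw [← Real.norm_eq_abs]
    refine (norm_integral_le_of_norm_le (g := fun z => M / 6 * ‖z‖ ^ 4)
      (integrable_of_continuous_of_ae_norm_lt hr (by fun_prop)) ?_).trans ?_
    · filter_upwards [hr] with z hz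
      exact abs_sub_taylor_three_le hu (fun y hy => hM y hy 4 le_rfl) hz
    · rw [integral_const_mul]
      gcongr
      exact integral_pow_four_le hr
  rw [integral_sub hFint hPint, hρ.integral_taylor_three hr u x] at hrem
  calc |2 * nonlocalOp ρ u x - (∫ z, ‖z‖ ^ 2 ∂ρ) / finrank ℝ E * Δ u x|
      = 2 * |nonlocalOp ρ u x - (∫ z, ‖z‖ ^ 2 ∂ρ) / finrank ℝ E * Δ u x / 2| := by
        rw [← abs_of_pos (two_pos (α := ℝ)), ← abs_mul, abs_of_pos (two_pos (α := ℝ))]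
        congr 1
        ring
    _ ≤ 2 * (M / 6 * (r ^ 2 * ∫ z, ‖z‖ ^ 2 ∂ρ)) := by gcongr; exact hrem
    _ = _ := by ring

/-- An isotropic interaction measure of horizon `δ` whose second moment is normalised so that
`2 * nonlocalOp ρ` is consistent with the Laplacian. -/
structure IsLaplacianKernel (δ : ℝ) (ρ : Measure E) : Prop where
  isIsotropic : IsIsotropic ρ
  ae_norm_lt : ∀ᵐ z ∂ρ, ‖z‖ < δ
  integral_norm_sq : ∫ z, ‖z‖ ^ 2 ∂ρ = finrank ℝ E

lemma IsLaplacianKernel.setIntegral_norm_sq_ball [IsFiniteMeasure ρ] (hρ : IsLaplacianKernel δ ρ)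
    (r : ℝ) : ∫ z in ball 0 r, ‖z‖ ^ 2 ∂ρ = finrank ℝ E - shellMoment ρ r := by
  have hint : Integrable (fun z => ‖z‖ ^ 2) ρ :=
    integrable_of_continuous_of_ae_norm_lt hρ.ae_norm_lt (by fun_prop)
  rw [← hρ.integral_norm_sq, shellMoment, ← integral_add_compl measurableSet_ball hint,
    add_sub_cancel_right]

lemma IsLaplacianKernel.abs_two_mul_nonlocalOp_restrict_ball_sub_laplacian_le [Nontrivial E]
    [IsFiniteMeasure ρ] (hρ : IsLaplacianKernel δ ρ) (hr : 0 < r)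
    (hu : ∀ y ∈ ball x r, ContDiffAt ℝ 4 u y)
    (hM : ∀ y ∈ ball x r, ∀ j ≤ 4, ‖iteratedFDeriv ℝ j u y‖ ≤ M) :
    |2 * nonlocalOp (ρ.restrict (ball 0 r)) u x - Δ u x| ≤
      M * (finrank ℝ E * r ^ 2 / 3 + shellMoment ρ r) := by
  set D := shellMoment ρ r
  set d : ℝ := (finrank ℝ E : ℝ)
  have hD : 0 ≤ D := shellMoment_nonneg ρ r
  have hd : 0 < d := Nat.cast_pos.2 finrank_pos
  have hMx : ‖iteratedFDeriv ℝ 2 u x‖ ≤ M := hM x (mem_ball_self hr) 2 (by norm_num)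
  have hM0 : 0 ≤ M := (norm_nonneg _).trans hMx
  have hball : |2 * nonlocalOp (ρ.restrict (ball 0 r)) u x - (d - D) / d * Δ u x| ≤
      M * r ^ 2 / 3 * (d - D) := by
    rw [← hρ.setIntegral_norm_sq_ball r]
    refine (hρ.isIsotropic.restrict_ball r).abs_two_mul_nonlocalOp_sub_le ?_ hM0 hu hM
    filter_upwards [ae_restrict_mem measurableSet_ball] with z hz using mem_ball_zero_iff.1 hz
  have hlap : |D / d * Δ u x| ≤ M * D := by
    rw [abs_mul, abs_of_nonneg (by positivity)]
    calc D / d * |Δ u x| ≤ D / d * (d * M) := by gcongr; exact abs_laplacian_le hMx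
      _ = M * D := by field_simp
  calc |2 * nonlocalOp (ρ.restrict (ball 0 r)) u x - Δ u x|
      = |(2 * nonlocalOp (ρ.restrict (ball 0 r)) u x - (d - D) / d * Δ u x) -
          D / d * Δ u x| := by
        congr 1
        field_simp
        ring
    _ ≤ M * r ^ 2 / 3 * (d - D) + M * D := (abs_sub _ _).trans (add_le_add hball hlap)
    _ ≤ M * r ^ 2 / 3 * d + M * D := by gcongr; linarith
    _ = M * (d * r ^ 2 / 3 + D) := by ring

lemma IsTruncation.abs_two_mul_nonlocalOp_sub_laplacian_le [Nontrivial E] [IsFiniteMeasure ρ]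
    (hν : IsTruncation r ρ ν) (hρ : IsLaplacianKernel δ ρ) (hr : 0 < r) (hrδ : r ≤ δ)
    (hu : ∀ y ∈ ball x δ, ContDiffAt ℝ 4 u y)
    (hM : ∀ y ∈ ball x δ, ∀ j ≤ 4, ‖iteratedFDeriv ℝ j u y‖ ≤ M) :
    |2 * nonlocalOp ν u x - Δ u x| ≤
      M * (finrank ℝ E * r ^ 2 / 3 + shellMoment ρ r + 2 * (shellMoment ρ r / r)) := by
  have := isFiniteMeasure_of_le ρ hν.le
  have hνδ : ∀ᵐ z ∂ν, ‖z‖ < δ := ae_mono hν.le hρ.ae_norm_lt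
  have hu1 : ∀ y ∈ ball x δ, ContDiffAt ℝ 1 u y := fun y hy => (hu y hy).of_le (by norm_num)
  have hM1 : ∀ y ∈ ball x δ, ‖iteratedFDeriv ℝ 1 u y‖ ≤ M := fun y hy => hM y hy 1 (by norm_num)
  have hM0 : 0 ≤ M := (norm_nonneg _).trans (hM1 x (mem_ball_self (hr.trans_le hrδ)))
  have hshell : |nonlocalOp ν u x - nonlocalOp (ρ.restrict (ball 0 r)) u x| ≤
      M / r * shellMoment ρ r :=
    hν.abs_integral_sub_le hr (integrable_of_continuous_of_ae_norm_lt hρ.ae_norm_lt (by fun_prop))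
      (integrable_sub_of_contDiffAt hνδ hu1 hM1) hM0
      (by filter_upwards [hνδ] with z hz using abs_sub_le_mul_norm hu1 hM1 hz)
  have hsub : ball x r ⊆ ball x δ := ball_subset_ball hrδ
  have hball := hρ.abs_two_mul_nonlocalOp_restrict_ball_sub_laplacian_le hr
    (fun y hy => hu y (hsub hy)) fun y hy => hM y (hsub hy)
  calc |2 * nonlocalOp ν u x - Δ u x|
      ≤ M * (finrank ℝ E * r ^ 2 / 3 + shellMoment ρ r) + 2 * (M / r * shellMoment ρ r) := by
        rw [abs_le] at *
        constructor <;> linarith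
    _ = _ := by ring

end Consistency

section Stability

open Module InnerProductSpace

variable {E : Type*} [NormedAddCommGroup E] [InnerProductSpace ℝ E] [FiniteDimensional ℝ E]
  [MeasurableSpace E] [BorelSpace E] {ρ : Measure E} [IsFiniteMeasure ρ] {r δ : ℝ}

lemma IsTruncation.le_nonlocalOp_norm_sub_sq {ν : Measure E} (hν : IsTruncation r ρ ν)
    (hρ : IsLaplacianKernel δ ρ) (hr : 0 < r) (p x : E) :
    finrank ℝ E - shellMoment ρ r - 2 * ‖x - p‖ / r * shellMoment ρ r ≤
      nonlocalOp ν (fun y => ‖y - p‖ ^ 2) x := by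
  have := isFiniteMeasure_of_le ρ hν.le
  have hνδ : ∀ᵐ z ∂ν, ‖z‖ < δ := ae_mono hν.le hρ.ae_norm_lt
  have hlin_int : Integrable (fun z => 2 * ⟪x - p, z⟫_ℝ) ν :=
    integrable_of_continuous_of_ae_norm_lt hνδ (by fun_prop)
  have hsq_int : Integrable (fun z => ‖z‖ ^ 2) ν :=
    integrable_of_continuous_of_ae_norm_lt hνδ (by fun_prop)
  have hexpand : nonlocalOp ν (fun y => ‖y - p‖ ^ 2) x =
      ∫ z, 2 * ⟪x - p, z⟫_ℝ ∂ν + ∫ z, ‖z‖ ^ 2 ∂ν := by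
    rw [← integral_add hlin_int hsq_int]
    refine integral_congr_ae (.of_forall fun z => ?_)
    simp only [add_sub_right_comm x z p, norm_add_sq_real]
    ring
  have hlin := hν.abs_integral_sub_le hr
    (integrable_of_continuous_of_ae_norm_lt hρ.ae_norm_lt (by fun_prop)) hlin_int
    (c := 2 * ‖x - p‖) (by positivity) <| .of_forall fun z => by
      rw [abs_mul, abs_two, mul_assoc]
      gcongr
      exact abs_real_inner_le_norm _ _
  have hball : ∫ z in ball 0 r, 2 * ⟪x - p, z⟫_ℝ ∂ρ = 0 :=
    (hρ.isIsotropic.restrict_ball r).integral_eq_zero_of_odd fun z => by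
      rw [inner_neg_right, mul_neg]
  have hsq : finrank ℝ E - shellMoment ρ r ≤ ∫ z, ‖z‖ ^ 2 ∂ν := by
    rw [← hρ.setIntegral_norm_sq_ball r, ← hν.restrict_ball]
    exact setIntegral_le_integral hsq_int (.of_forall fun z => by positivity)
  rw [hball, sub_zero] at hlin
  linarith [(abs_le.1 hlin).1]

lemma IsLaplacianKernel.abs_le_of_abs_nonlocalOp_le [Nontrivial E] (hρ : IsLaplacianKernel δ ρ)
    {ν : E → Measure E} {Ω T : Set E} (hν : ∀ x ∈ Ω, IsTruncation r ρ (ν x))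
    (hΩT : Ω ⊆ T) (hT : ∀ x ∈ Ω, ∀ᵐ z ∂ν x, x + z ∈ T) {p : E} {R : ℝ}
    (hTR : T ⊆ closedBall p R) (hr : 0 < r) (hrR : r ≤ R) (hshell : 4 * R * shellMoment ρ r / r ≤ 1)
    {e : E → ℝ} {K b c : ℝ} (hei : ∀ x ∈ Ω, Integrable (fun z => e (x + z) - e x) (ν x))
    (hK : ∀ x ∈ T, |e x| ≤ K) (hc : 0 ≤ c) (hop : ∀ x ∈ Ω, |nonlocalOp (ν x) e x| ≤ c)
    (hb : ∀ x ∈ T \ Ω, |e x| ≤ b) : ∀ x ∈ T, |e x| ≤ b + c * (4 * R ^ 2) := by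
  set D := shellMoment ρ r
  have hD : 0 ≤ D := shellMoment_nonneg ρ r
  have hnorm : ∀ x ∈ T, ‖x - p‖ ≤ R := fun x hx => mem_closedBall_iff_norm.1 (hTR hx)
  refine abs_le_add_mul_of_abs_nonlocalOp_le (φ := fun y => 4 * ‖y - p‖ ^ 2)
    (fun x hx => (hν x hx).le) hT (fun x hx => ?_) hei (fun x hx => ⟨by positivity, ?_⟩) hK hc
    (fun x hx => ?_) hop hb
  · have := isFiniteMeasure_of_le ρ (hν x hx).le
    exact integrable_of_continuous_of_ae_norm_lt (ae_mono (hν x hx).le hρ.ae_norm_lt)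
      (by fun_prop)
  · have := hnorm x hx
    gcongr
  · have hd : (1 : ℝ) ≤ finrank ℝ E := Nat.one_le_cast.2 finrank_pos
    have hDr : 4 * D ≤ 1 := calc
      4 * D = 4 * r * D / r := by field_simp
      _ ≤ 4 * R * D / r := by gcongr
      _ ≤ 1 := hshell
    have hdrift : 2 * ‖x - p‖ / r * D ≤ 1 / 2 := calc
      2 * ‖x - p‖ / r * D ≤ 2 * R / r * D := by gcongr; exact hnorm x (hΩT hx)
      _ = 4 * R * D / r / 2 := by ring
      _ ≤ 1 / 2 := by linarith
    rw [nonlocalOp_const_mul]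
    linarith [(hν x hx).le_nonlocalOp_norm_sub_sq hρ hr p x]

end Stability

section RadialMeasure

open Module

variable {E : Type*} [NormedAddCommGroup E] [InnerProductSpace ℝ E] [FiniteDimensional ℝ E]
  [MeasurableSpace E] [BorelSpace E] {γ : ℝ → ℝ}

/-- The measure on `E` with radial density `z ↦ γ ‖z‖`, negative values of `γ` being cut off. -/
def radialMeasure (E : Type*) [NormedAddCommGroup E] [InnerProductSpace ℝ E]
    [FiniteDimensional ℝ E] [MeasurableSpace E] [BorelSpace E] (γ : ℝ → ℝ) : Measure E :=
  volume.withDensity fun z => ENNReal.ofReal (γ ‖z‖)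

lemma isIsotropic_radialMeasure (hγ : Measurable γ) : IsIsotropic (radialMeasure E γ) := by
  intro Q
  refine ⟨Q.continuous.measurable, Measure.ext fun s hs => ?_⟩
  have h := Q.measurePreserving.setLIntegral_comp_preimage hs
    (f := fun z => ENNReal.ofReal (γ ‖z‖)) (by fun_prop)
  simp only [Q.norm_map] at h
  rw [Measure.map_apply Q.continuous.measurable hs, radialMeasure,
    withDensity_apply _ (Q.continuous.measurable hs), withDensity_apply _ hs, h]

lemma integral_radialMeasure [Nontrivial E] (hγ : Measurable γ) (hγ0 : ∀ s, 0 < s → 0 ≤ γ s)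
    (F : E → ℝ) : ∫ z, F z ∂radialMeasure E γ = ∫ z, γ ‖z‖ * F z := by
  rw [radialMeasure, integral_withDensity_eq_integral_toReal_smul (by fun_prop)
    (.of_forall fun z => ENNReal.ofReal_lt_top)]
  refine integral_congr_ae ?_
  filter_upwards [Measure.ae_ne volume (0 : E)] with z hz
  rw [ENNReal.toReal_ofReal (hγ0 _ (norm_pos_iff.2 hz)), smul_eq_mul]

end RadialMeasure

namespace RadialKernel

variable {d : ℕ} {δ : ℝ} {γ : ℝ → ℝ}

lemma nonneg (hγ : RadialKernel d δ γ) {s : ℝ} (hs : 0 < s) : 0 ≤ γ s := by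
  obtain ⟨-, hpos, hzero, -⟩ := hγ
  rcases lt_or_ge s δ with hsδ | hsδ
  · exact (hpos s hs hsδ).le
  · exact (hzero s hsδ).ge

lemma isFiniteMeasure_radialMeasure (hγ : RadialKernel d δ γ)
    (hint : IntegrableOn (fun z : EuclideanSpace ℝ (Fin d) => γ ‖z‖) (ball 0 δ)) :
    IsFiniteMeasure (radialMeasure (EuclideanSpace ℝ (Fin d)) γ) := by
  obtain ⟨-, -, hzero, -⟩ := hγ
  refine isFiniteMeasure_withDensity_ofReal (Integrable.hasFiniteIntegral ?_)
  exact hint.integrable_of_forall_notMem_eq_zero fun z hz => hzero _ (by simpa using hz)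

lemma integral_mul_norm_sq [NeZero d] (hγ : RadialKernel d δ γ) :
    ∫ z : EuclideanSpace ℝ (Fin d), γ ‖z‖ * ‖z‖ ^ 2 = d := by
  obtain ⟨-, -, hzero, -, hmoment⟩ := hγ
  have hIoo : ∫ s in Ioo 0 δ, s ^ (d + 1) * γ s = ∫ s in Ioi 0, s ^ (d - 1) • (γ s * s ^ 2) := by
    have hpow : ∀ s : ℝ, s ^ (d - 1) • (γ s * s ^ 2) = s ^ (d + 1) * γ s := fun s => by
      rw [← Nat.sub_one_add_one (NeZero.ne d), smul_eq_mul]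
      simp only [Nat.add_sub_cancel]
      ring
    simp only [hpow]
    refine (setIntegral_eq_of_subset_of_forall_sdiff_eq_zero measurableSet_Ioi Ioo_subset_Ioi_self
      fun s hs => ?_).symm
    rw [hzero s (not_lt.1 fun h => hs.2 ⟨hs.1, h⟩), mul_zero]
  rw [integral_fun_norm_addHaar volume fun s => γ s * s ^ 2, finrank_euclideanSpace_fin, ← hIoo,
    nsmul_eq_mul, smul_eq_mul, ← mul_assoc]
  exact hmoment

lemma isLaplacianKernel_radialMeasure [NeZero d] (hγ : RadialKernel d δ γ) :
    IsLaplacianKernel δ (radialMeasure (EuclideanSpace ℝ (Fin d)) γ) where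
  isIsotropic := isIsotropic_radialMeasure hγ.1
  ae_norm_lt := by
    obtain ⟨hmeas, -, hzero, -⟩ := hγ
    refine (ae_withDensity_iff (by fun_prop)).2 (.of_forall fun z hz => ?_)
    contrapose! hz
    rw [hzero _ hz, ENNReal.ofReal_zero]
  integral_norm_sq := by
    rw [integral_radialMeasure hγ.1 fun s hs => hγ.nonneg hs, hγ.integral_mul_norm_sq,
      finrank_euclideanSpace_fin]

lemma shellMoment_radialMeasure [NeZero d] (hγ : RadialKernel d δ γ) (r : ℝ) :
    shellMoment (radialMeasure (EuclideanSpace ℝ (Fin d)) γ) r =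
      ∫ z in {z : EuclideanSpace ℝ (Fin d) | r ≤ ‖z‖ ∧ ‖z‖ ≤ δ}, ‖z‖ ^ 2 * γ ‖z‖ := by
  have hshell : {z : EuclideanSpace ℝ (Fin d) | r ≤ ‖z‖ ∧ ‖z‖ ≤ δ} ⊆ (ball 0 r)ᶜ := fun z hz => by
    simpa using hz.1
  have hzero : ∀ z ∈ (ball 0 r)ᶜ \ {z : EuclideanSpace ℝ (Fin d) | r ≤ ‖z‖ ∧ ‖z‖ ≤ δ},
      ‖z‖ ^ 2 * γ ‖z‖ = 0 := by
    rintro z ⟨hzr, hz⟩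
    have hδz : δ < ‖z‖ := not_le.1 fun h => hz ⟨by simpa using hzr, h⟩
    rw [hγ.2.2.1 _ hδz.le, mul_zero]
  rw [← setIntegral_eq_of_subset_of_forall_sdiff_eq_zero measurableSet_ball.compl hshell hzero,
    shellMoment, ← integral_indicator measurableSet_ball.compl,
    integral_radialMeasure hγ.1 fun s hs => hγ.nonneg hs,
    ← integral_indicator measurableSet_ball.compl]
  simp only [mul_comm (‖_‖ ^ 2), indicator_mul_right]

lemma setIntegral_sub_mul_eq_nonlocalOp [NeZero d] (hγ : RadialKernel d δ γ)
    {T : Set (EuclideanSpace ℝ (Fin d))} {x : EuclideanSpace ℝ (Fin d)} (hT : ball x δ ⊆ T)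
    {κ m : EuclideanSpace ℝ (Fin d) → ℝ} (hm : Measurable m) (hm0 : ∀ z, 0 ≤ m z)
    (hκ : ∀ᵐ z, κ (x + z) = γ ‖z‖ * m z) (u : EuclideanSpace ℝ (Fin d) → ℝ) :
    ∫ y in T, (u y - u x) * κ y = nonlocalOp
      ((radialMeasure (EuclideanSpace ℝ (Fin d)) γ).withDensity fun z => ENNReal.ofReal (m z))
      u x := by
  have hκ' : ∀ᵐ y, κ y = γ ‖y - x‖ * m (y - x) := by
    filter_upwards [(measurePreserving_sub_right volume x).quasiMeasurePreserving.ae hκ] with y hy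
    rwa [add_sub_cancel] at hy
  have hκT : ∀ᵐ y, y ∉ T → (u y - u x) * κ y = 0 := by
    filter_upwards [hκ'] with y hy hyT
    have hδ : δ ≤ ‖y - x‖ := not_lt.1 fun h => hyT (hT (mem_ball_iff_norm.2 h))
    rw [hy, hγ.2.2.1 _ hδ, zero_mul, mul_zero]
  rw [setIntegral_eq_integral_of_ae_compl_eq_zero hκT, ← integral_add_left_eq_self _ x, nonlocalOp,
    integral_withDensity_eq_integral_toReal_smul (by fun_prop)
      (.of_forall fun z => ENNReal.ofReal_lt_top),
    integral_radialMeasure hγ.1 fun s hs => hγ.nonneg hs]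
  refine integral_congr_ae ?_
  filter_upwards [hκ] with z hz
  rw [hz, ENNReal.toReal_ofReal (hm0 z), smul_eq_mul]
  ring

end RadialKernel

section DomainGeometry

variable {d : ℕ} {Ω : Set (EuclideanSpace ℝ (Fin d))} {δ δ' : ℝ}

lemma ball_subset_hatΩ {x : EuclideanSpace ℝ (Fin d)} (hx : x ∈ Ω) : ball x δ ⊆ hatΩ Ω δ := by
  intro y hy
  refine or_iff_not_imp_left.2 fun hyΩ => ⟨hyΩ, ?_⟩
  have hne : Ωᶜ ≠ univ := by
    rw [Ne, compl_univ_iff]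
    exact (nonempty_of_mem hx).ne_empty
  obtain ⟨w, hw, hdist⟩ := exists_mem_frontier_infDist_compl_eq_dist (mem_compl hyΩ) hne
  rw [compl_compl] at hdist
  rw [frontier_compl] at hw
  calc infDist y (frontier Ω) ≤ dist y w := infDist_le_dist_of_mem hw
    _ = infDist y Ω := hdist.symm
    _ ≤ dist y x := infDist_le_dist_of_mem hx
    _ < δ := hy

lemma hatΩ_mono (h : δ ≤ δ') : hatΩ Ω δ ⊆ hatΩ Ω δ' :=
  union_subset_union_right Ω fun _ hy => ⟨hy.1, hy.2.trans_le h⟩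

lemma hatΩ_diff_subset_omegaC : hatΩ Ω δ \ Ω ⊆ omegaC Ω δ := fun _ hy => hy.1.resolve_left hy.2

lemma le_of_ball_subset_closedBall {E : Type*} [NormedAddCommGroup E] [NormedSpace ℝ E]
    [Nontrivial E] {x y : E} {r R : ℝ} (hr : 0 < r) (h : ball x r ⊆ closedBall y R) : r ≤ R := by
  have hR : 0 ≤ R := dist_nonneg.trans (h (mem_ball_self hr))
  have hdiam := (diam_mono h isBounded_closedBall).trans (diam_closedBall hR)
  rw [Metric.diam_ball_eq x hr.le] at hdiam
  linarith

end DomainGeometry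

section ErrorEstimate

open Module InnerProductSpace Laplacian

variable {E : Type*} [NormedAddCommGroup E] [InnerProductSpace ℝ E] [FiniteDimensional ℝ E]
  [MeasurableSpace E] [BorelSpace E]

lemma IsTruncation.abs_nonlocalOp_sub_le [Nontrivial E] {ρ ν : Measure E} [IsFiniteMeasure ρ]
    {r δ M ε : ℝ} {u u₀ : E → ℝ} {x : E} (hν : IsTruncation r ρ ν) (hρ : IsLaplacianKernel δ ρ)
    (hr : 0 < r) (hrδ : r ≤ δ) (hu₀ : ∀ y ∈ ball x δ, ContDiffAt ℝ 4 u₀ y)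
    (hM : ∀ y ∈ ball x δ, ∀ j ≤ 4, ‖iteratedFDeriv ℝ j u₀ y‖ ≤ M)
    (hui : Integrable (fun z => u (x + z) - u x) ν)
    (hu₀i : Integrable (fun z => u₀ (x + z) - u₀ x) ν)
    (hop : |2 * nonlocalOp ν u x - Δ u₀ x| ≤ ε) :
    |nonlocalOp ν (fun y => u y - u₀ y) x| ≤ (ε +
      M * (finrank ℝ E * r ^ 2 / 3 + shellMoment ρ r + 2 * (shellMoment ρ r / r))) / 2 := by
  have hcons := hν.abs_two_mul_nonlocalOp_sub_laplacian_le hρ hr hrδ hu₀ hM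
  rw [nonlocalOp_sub hui hu₀i]
  rw [abs_le] at hop hcons ⊢
  constructor <;> linarith

lemma IsLaplacianKernel.abs_sub_le [Nontrivial E] {ρ : Measure E} [IsFiniteMeasure ρ]
    {ν : E → Measure E} {r δ R M K ε b : ℝ} {Ω T : Set E} {p : E} {u u₀ : E → ℝ}
    (hρ : IsLaplacianKernel δ ρ) (hν : ∀ x ∈ Ω, IsTruncation r ρ (ν x)) (hr : 0 < r) (hrδ : r ≤ δ)
    (hball : ∀ x ∈ Ω, ball x δ ⊆ T) (hTR : T ⊆ closedBall p R)
    (hshell : 4 * R * shellMoment ρ r / r ≤ 1) (hu₀ : ∀ y ∈ T, ContDiffAt ℝ 4 u₀ y)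
    (hM : ∀ y ∈ T, ∀ j ≤ 4, ‖iteratedFDeriv ℝ j u₀ y‖ ≤ M) (hu : Measurable u)
    (hK : ∀ y ∈ T, |u y| ≤ K) (hop : ∀ x ∈ Ω, |2 * nonlocalOp (ν x) u x - Δ u₀ x| ≤ ε)
    (hb : ∀ y ∈ T \ Ω, |u y - u₀ y| ≤ b) {x : E} (hx : x ∈ Ω) :
    |u x - u₀ x| ≤ b + 2 * R ^ 2 *
      (ε + M * (finrank ℝ E * r ^ 2 / 3 + shellMoment ρ r + 2 * (shellMoment ρ r / r))) := by
  have hδ : 0 < δ := hr.trans_le hrδ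
  have hΩT : Ω ⊆ T := fun y hy => hball y hy (mem_ball_self hδ)
  have hfin : ∀ y ∈ Ω, IsFiniteMeasure (ν y) := fun y hy => isFiniteMeasure_of_le ρ (hν y hy).le
  have hνδ : ∀ y ∈ Ω, ∀ᵐ z ∂ν y, ‖z‖ < δ := fun y hy => ae_mono (hν y hy).le hρ.ae_norm_lt
  have hT : ∀ y ∈ Ω, ∀ᵐ z ∂ν y, y + z ∈ T := fun y hy => by
    filter_upwards [hνδ y hy] with z hz using hball y hy (by simpa using hz)
  have hui : ∀ y ∈ Ω, Integrable (fun z => u (y + z) - u y) (ν y) := fun y hy =>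
    have := hfin y hy
    integrable_sub_of_forall_abs_le hu (hT y hy) hK
  have hu₀i : ∀ y ∈ Ω, Integrable (fun z => u₀ (y + z) - u₀ y) (ν y) := fun y hy =>
    have := hfin y hy
    integrable_sub_of_contDiffAt (hνδ y hy)
      (fun z hz => (hu₀ z (hball y hy hz)).of_le (by norm_num))
      fun z hz => hM z (hball y hy hz) 1 (by norm_num)
  have hop_err := fun y hy => (hν y hy).abs_nonlocalOp_sub_le hρ hr hrδ
    (fun z hz => hu₀ z (hball y hy hz)) (fun z hz => hM z (hball y hy hz)) (hui y hy) (hu₀i y hy)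
    (hop y hy)
  have hbdd : ∀ y ∈ T, |u y - u₀ y| ≤ K + M := fun y hy => by
    have hu₀y : |u₀ y| ≤ M := by simpa using hM y hy 0 (by norm_num)
    exact (abs_sub _ _).trans (add_le_add (hK y hy) hu₀y)
  have hstab := hρ.abs_le_of_abs_nonlocalOp_le hν hΩT hT hTR hr
    (hrδ.trans (le_of_ball_subset_closedBall hδ ((hball x hx).trans hTR))) hshell
    (fun y hy => ((hui y hy).sub (hu₀i y hy)).congr (.of_forall fun z => sub_sub_sub_comm _ _ _ _))
    hbdd ((abs_nonneg _).trans (hop_err x hx)) hop_err hb x (hΩT hx)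
  linarith

lemma truncationError_le {a D r δ M : ℝ} (ha : 0 ≤ a) (hM : 0 ≤ M) (hD : 0 ≤ D)
    (hδ : δ ∈ Ioc (0 : ℝ) 1) (hr : r ∈ Icc (δ / 2) δ) :
    M * (a * r ^ 2 / 3 + D + 2 * (D / r)) ≤ (a + 5) * M * (δ ^ 2 + δ⁻¹ * D) := by
  obtain ⟨hδ0, hδ1⟩ := hδ
  have hr0 : 0 < r := (half_pos hδ0).trans_le hr.1
  have hr2 : r ^ 2 ≤ δ ^ 2 := by gcongr; exact hr.2
  have hDδ : D ≤ δ⁻¹ * D := le_mul_of_one_le_left hD ((one_le_inv₀ hδ0).2 hδ1)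
  have hDr : D / r ≤ 2 * (δ⁻¹ * D) := calc
    D / r ≤ D / (δ / 2) := by gcongr; exact hr.1
    _ = 2 * (δ⁻¹ * D) := by field_simp
  have har : a * r ^ 2 ≤ a * δ ^ 2 := by gcongr
  have haD : 0 ≤ a * (δ⁻¹ * D) := by positivity
  have haδ : 0 ≤ a * δ ^ 2 := by positivity
  calc M * (a * r ^ 2 / 3 + D + 2 * (D / r)) ≤ M * ((a + 5) * (δ ^ 2 + δ⁻¹ * D)) := by
        gcongr
        nlinarith [sq_nonneg δ]
    _ = (a + 5) * M * (δ ^ 2 + δ⁻¹ * D) := by ring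

lemma lap_eq_laplacian {d : ℕ} (u : EuclideanSpace ℝ (Fin d) → ℝ) : lap d u = Δ u := by
  rw [laplacian_eq_iteratedFDeriv_orthonormalBasis u (EuclideanSpace.basisFun (Fin d) ℝ)]
  funext x
  simp only [lap, EuclideanSpace.basisFun_apply]

end ErrorEstimate

theorem stmt18_general {d : ℕ} [NeZero d] {Ω : Set (EuclideanSpace ℝ (Fin d))}
    {A B M R δ r D Mu : ℝ} {xstar : EuclideanSpace ℝ (Fin d)} {γ : ℝ → ℝ}
    {k : EuclideanSpace ℝ (Fin d) → EuclideanSpace ℝ (Fin d) → ℝ}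
    {u₀ u : EuclideanSpace ℝ (Fin d) → ℝ} (hA : 0 ≤ A) (hB : 0 ≤ B)
    (hcont : hatΩ Ω δ ⊆ closedBall xstar R) (hδ : δ ∈ Ioc (0 : ℝ) 1) (hr : r ∈ Icc (δ / 2) δ)
    (hγ : RadialKernel d δ γ)
    (hγint : IntegrableOn (fun z : EuclideanSpace ℝ (Fin d) => γ ‖z‖) (ball 0 δ))
    (hD : D = ∫ z in {z : EuclideanSpace ℝ (Fin d) | r ≤ ‖z‖ ∧ ‖z‖ ≤ δ}, ‖z‖ ^ 2 * γ ‖z‖)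
    (hshell : 4 * R * D / r ≤ 1)
    (hk : ∀ x ∈ Ω, ∃ m : EuclideanSpace ℝ (Fin d) → ℝ, Measurable m ∧ (∀ z, m z ∈ Icc (0 : ℝ) 1) ∧
      (∀ z, ‖z‖ < r → m z = 1) ∧ ∀ᵐ z, k x (x + z) = γ ‖z‖ * m z)
    (hu₀ : ∀ y ∈ hatΩ Ω δ, ContDiffAt ℝ 4 u₀ y)
    (hM : ∀ y ∈ hatΩ Ω δ, ∀ j ≤ 4, ‖iteratedFDeriv ℝ j u₀ y‖ ≤ M)
    (hu : Measurable u) (hMu : ∀ x ∈ hatΩ Ω δ, |u x| ≤ Mu)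
    (hop : ∀ x ∈ Ω, |-(2 * ∫ y in hatΩ Ω δ, (u y - u x) * k x y) - -lap d u₀ x| ≤ A * δ ^ 2)
    (hbd : ∀ x ∈ omegaC Ω δ, |u x - u₀ x| ≤ B * δ ^ 2) {x : EuclideanSpace ℝ (Fin d)}
    (hx : x ∈ Ω) :
    |u x - u₀ x| ≤ (B + 2 * R ^ 2 * (A + (d + 5) * M)) * (δ ^ 2 + δ⁻¹ * D) := by
  choose! m hm hm01 hmr hkm using hk
  have := hγ.isFiniteMeasure_radialMeasure hγint
  set ρ := radialMeasure (EuclideanSpace ℝ (Fin d)) γ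
  have hDρ : shellMoment ρ r = D := by rw [hγ.shellMoment_radialMeasure, hD]
  have hD0 : 0 ≤ D := hDρ ▸ shellMoment_nonneg ρ r
  have hM0 : 0 ≤ M := (norm_nonneg _).trans (hM x (.inl hx) 0 (by norm_num))
  have herr := hγ.isLaplacianKernel_radialMeasure.abs_sub_le (u := u) (p := xstar)
    (ν := fun x => ρ.withDensity fun z => ENNReal.ofReal (m x z))
    (fun x hx => isTruncation_withDensity (fun z => (hm01 x hx z).2) (hmr x hx))
    ((half_pos hδ.1).trans_le hr.1) hr.2 (fun x hx => ball_subset_hatΩ hx) hcont (by rwa [hDρ])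
    hu₀ hM hu hMu (ε := A * δ ^ 2) (fun x hx => ?_)
    (fun y hy => hbd y (hatΩ_diff_subset_omegaC hy)) hx
  · rw [hDρ, finrank_euclideanSpace_fin] at herr
    have htrunc := truncationError_le d.cast_nonneg hM0 hD0 hδ hr
    have hδD : δ ^ 2 ≤ δ ^ 2 + δ⁻¹ * D :=
      le_add_of_nonneg_right (mul_nonneg (inv_nonneg.2 hδ.1.le) hD0)
    calc |u x - u₀ x| ≤ _ := herr
      _ ≤ B * (δ ^ 2 + δ⁻¹ * D) + 2 * R ^ 2 *
          (A * (δ ^ 2 + δ⁻¹ * D) + (d + 5) * M * (δ ^ 2 + δ⁻¹ * D)) := by gcongr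
      _ = _ := by ring
  · have h := hop x hx
    rwa [hγ.setIntegral_sub_mul_eq_nonlocalOp (ball_subset_hatΩ hx) (hm x hx)
      (fun z => (hm01 x hx z).1) (hkm x hx), lap_eq_laplacian, ← neg_sub', abs_neg] at h

/-- uniform-norm error estimate for nonlocal problems with
non-symmetric polygonal interaction neighborhoods. -/
theorem stmt18 (Ω : Set (EuclideanSpace ℝ (Fin 2)))
    (hΩb : Bornology.IsBounded Ω) (hΩo : IsOpen Ω)
    (δ₀ : ℝ) (hδ₀ : δ₀ ∈ Ioc (0 : ℝ) 1) (μ : ℕ) (hμ : μ = 0 ∨ μ = 1)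
    (A B M R : ℝ) (hA : 0 < A) (hB : 0 < B) (hM : 0 < M) (hR : 0 < R)
    (xstar : EuclideanSpace ℝ (Fin 2)) (hcont : hatΩ Ω δ₀ ⊆ closedBall xstar R) :
    ∃ C > 0, ∀ δ ∈ Ioc (0 : ℝ) δ₀, ∀ r ∈ Icc (δ / 2) δ,
      ∀ γ : ℝ → ℝ, RadialKernel 2 δ γ →
      IntegrableOn (fun z : EuclideanSpace ℝ (Fin 2) => γ ‖z‖) (ball 0 δ) →
      ∀ D : ℝ,
        D = (∫ z in {z : EuclideanSpace ℝ (Fin 2) | r ≤ ‖z‖ ∧ ‖z‖ ≤ δ},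
          ‖z‖ ^ 2 * γ ‖z‖) →
        D ≤ 1 / 2 → 4 * R * D / r ≤ 1 →
      ∀ k : EuclideanSpace ℝ (Fin 2) → EuclideanSpace ℝ (Fin 2) → ℝ,
        Measurable (Function.uncurry k) →
        (∀ x ∈ hatΩ Ω δ, ∀ y ∈ hatΩ Ω δ, 0 ≤ k x y) →
        (∀ x ∈ Ω, ∃ m : EuclideanSpace ℝ (Fin 2) → ℝ, Measurable m ∧
          (∀ z, m z ∈ Icc (0 : ℝ) 1) ∧
          (∀ z, ‖z‖ ≤ r → m z = 1) ∧ (∀ z, δ ≤ ‖z‖ → m z = 0) ∧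
          (∀ᵐ z ∂volume, k x (x + z) = γ ‖z‖ * m z)) →
      ∀ u₀ : EuclideanSpace ℝ (Fin 2) → ℝ,
        (∃ V, IsOpen V ∧ closure (hatΩ Ω δ) ⊆ V ∧ ContDiffOn ℝ 4 u₀ V) →
        (∀ y ∈ hatΩ Ω δ, ∀ j ≤ 4, ‖iteratedFDeriv ℝ j u₀ y‖ ≤ M) →
      ∀ f : EuclideanSpace ℝ (Fin 2) → ℝ,
        (∀ x ∈ Ω, |f x - (-(lap 2 u₀ x))| ≤ A * δ ^ 2) →
      ∀ g : EuclideanSpace ℝ (Fin 2) → ℝ,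
        (∀ x ∈ omegaC Ω δ, |g x - u₀ x| ≤ B * δ ^ (2 + μ)) →
      ∀ u : EuclideanSpace ℝ (Fin 2) → ℝ, Measurable u →
        (∃ Mu : ℝ, ∀ x ∈ hatΩ Ω δ, |u x| ≤ Mu) →
        (∀ x ∈ Ω, -(2 * ∫ y in hatΩ Ω δ, (u y - u x) * k x y) = f x) →
        (∀ x ∈ omegaC Ω δ, u x = g x) →
      ∀ x ∈ Ω, |u x - u₀ x| ≤ C * (δ ^ 2 + δ⁻¹ * D) := by
  refine ⟨B + 2 * R ^ 2 * (A + ((2 : ℕ) + 5) * M), by positivity, ?_⟩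
  rintro δ hδ r hr γ hγ hγint D hD - hshell k - - hk u₀ ⟨V, hV, hsub, hu₀⟩ hM f hf g hg u hu
    ⟨Mu, hMu⟩ hueq hug x hx
  have hδ1 : δ ≤ 1 := hδ.2.trans hδ₀.2
  have hpow : B * δ ^ (2 + μ) ≤ B * δ ^ 2 :=
    mul_le_mul_of_nonneg_left (pow_le_pow_of_le_one hδ.1.le hδ1 (Nat.le_add_right 2 μ)) hB.le
  exact stmt18_general hA.le hB.le ((hatΩ_mono hδ.2).trans hcont) ⟨hδ.1, hδ1⟩ hr hγ hγint hD hshell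
    (fun x hx => (hk x hx).imp fun _ h => ⟨h.1, h.2.1, fun z hz => h.2.2.1 z hz.le, h.2.2.2.2⟩)
    (fun y hy => hu₀.contDiffAt (hV.mem_nhds (hsub (subset_closure hy)))) hM hu hMu
    (fun x hx => (hueq x hx).symm ▸ hf x hx) (fun y hy => hug y hy ▸ (hg y hy).trans hpow) hx
end
end
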